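/- arXiv:0710.2614 — 3 statements merged into one kernel-verified Lean document; each statement's English description precedes it below -/
import Mathlib

section
/- Let a, b ∈ ℝ with a < b and let n ≥ 2. Define the sample variance s²(x) = (1/(n−1)) Σ_{i=1}^n (x_i − (1/n) Σ_{j=1}^n x_j)² for x ∈ [a,b]^n. Then (1/(b−a)^n) ∫_{[a,b]^n} s²(x)/(max_i x_i − min_i x_i) dx = ((n+2)/(12n)) (b−a). -/
open MeasureTheory

/-! Let `r` be the variance-to-range ratio and `I` its integral over the unit cube. Since `r` is
translation invariant and homogeneous of degree `1`, its integral over a cube of side `s` is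
`s ^ (n + 1) * I`. The points of the unit cube with `t ≤ min x` form a cube of side `1 - t`, so by
Fubini `∫ min x * r x = ∫ (1 - t) ^ (n + 1) * I dt = I / (n + 2)`; the same computation gives
`∫ (1 - max x) * r x = I / (n + 2)`. Subtracting both from `I` leaves
`∫ s² = ∫ (max x - min x) * r x = n / (n + 2) * I`. But `∫ s²` is the variance `1 / 12` of the
uniform distribution on `[0, 1]`, because the sample variance is an unbiased estimator. -/

open ProbabilityTheory Set
open scoped Pointwise

section LayerCake

variable {α E : Type*} [MeasurableSpace α] {μ : Measure α} [SFinite μ]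
  [NormedAddCommGroup E] [NormedSpace ℝ E] [CompleteSpace E] {f : α → E} {g : α → ℝ}

theorem integral_smul_eq_intervalIntegral_setIntegral_le {c : ℝ} (hf : Integrable f μ)
    (hg : Measurable g) (hg_mem : ∀ᵐ x ∂μ, g x ∈ Icc 0 c) :
    ∫ x, g x • f x ∂μ = ∫ t in 0..c, ∫ x in {x | t ≤ g x}, f x ∂μ := by
  rcases lt_or_ge c 0 with hc | hc
  · have hμ : μ = 0 := ae_eq_bot.1 <| Filter.eventually_false_iff_eq_bot.1 <|
      hg_mem.mono fun x hx => (hx.1.trans hx.2).not_gt hc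
    simp [hμ]
  have hmeas : MeasurableSet {z : α × ℝ | z.2 ≤ g z.1} :=
    measurableSet_le measurable_snd (hg.comp measurable_fst)
  have hint : Integrable (Function.uncurry fun x t => (Iic (g x)).indicator (fun _ => f x) t)
      (μ.prod (volume.restrict (Ioc 0 c))) :=
    (hf.comp_fst (volume.restrict (Ioc 0 c))).indicator hmeas
  calc
    ∫ x, g x • f x ∂μ
        = ∫ x, (∫ t in Ioc 0 c, (Iic (g x)).indicator (fun _ => f x) t) ∂μ := by
      refine integral_congr_ae (hg_mem.mono fun x hx => ?_)
      simp only [setIntegral_indicator measurableSet_Iic, Ioc_inter_Iic, min_eq_right hx.2,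
        setIntegral_const, Real.volume_real_Ioc_of_le hx.1, sub_zero]
    _ = ∫ t in Ioc 0 c, ∫ x, (Iic (g x)).indicator (fun _ => f x) t ∂μ :=
      integral_integral_swap hint
    _ = ∫ t in 0..c, ∫ x in {x | t ≤ g x}, f x ∂μ := by
      rw [intervalIntegral.integral_of_le hc]
      refine integral_congr_ae (.of_forall fun t => ?_)
      exact integral_indicator (measurableSet_le measurable_const hg)

theorem integral_smul_eq_of_setIntegral_le_eq_pow {m : ℕ} (hf : Integrable f μ)
    (hg : Measurable g) (hg_mem : ∀ᵐ x ∂μ, g x ∈ Icc 0 1)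
    (hpow : ∀ t ∈ Ico (0 : ℝ) 1, ∫ x in {x | t ≤ g x}, f x ∂μ = (1 - t) ^ m • ∫ x, f x ∂μ) :
    ∫ x, g x • f x ∂μ = ((m : ℝ) + 1)⁻¹ • ∫ x, f x ∂μ := by
  rw [integral_smul_eq_intervalIntegral_setIntegral_le hf hg hg_mem,
    intervalIntegral.integral_of_le zero_le_one, ← integral_Ico_eq_integral_Ioc,
    setIntegral_congr_fun measurableSet_Ico hpow, integral_smul_const,
    integral_Ico_eq_integral_Ioc, ← intervalIntegral.integral_of_le zero_le_one,
    intervalIntegral.integral_comp_sub_left (fun t => t ^ m)]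
  simp

end LayerCake

section Cube

variable {ι : Type*} {a b c r : ℝ} {x : ι → ℝ}

/-- The cube `[a, b]^ι`. -/
def cube (ι : Type*) (a b : ℝ) : Set (ι → ℝ) :=
  univ.pi fun _ => Icc a b

theorem mem_cube : x ∈ cube ι a b ↔ ∀ i, a ≤ x i ∧ x i ≤ b := by
  simp only [cube, mem_univ_pi, mem_Icc]

theorem isCompact_cube : IsCompact (cube ι a b) :=
  isCompact_univ_pi fun _ => isCompact_Icc

theorem measurableSet_cube [Countable ι] : MeasurableSet (cube ι a b) :=
  .univ_pi fun _ => measurableSet_Icc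

theorem preimage_add_const_cube :
    (fun x : ι → ℝ => x + fun _ => c) ⁻¹' cube ι a b = cube ι (a - c) (b - c) := by
  ext x
  simp only [mem_preimage, mem_cube, Pi.add_apply, sub_le_iff_le_add, le_sub_iff_add_le]

theorem smul_cube (hr : 0 < r) : r • cube ι a b = cube ι (r * a) (r * b) := by
  simp only [cube, smul_univ_pi, Pi.smul_def, LinearOrderedField.smul_Icc hr]

end Cube

section AffineHomogeneous

variable {ι E : Type*} [SMul ℝ E]

/-- `f` is invariant under adding a constant to all coordinates, and positively homogeneous of
degree `k`, merged into one equation; such functions have scaling integrals over cubes. -/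
def IsAffineHomogeneous (k : ℕ) (f : (ι → ℝ) → E) : Prop :=
  ∀ ⦃r : ℝ⦄, 0 < r → ∀ (c : ℝ) (x : ι → ℝ), f (r • x + fun _ => c) = r ^ k • f x

theorem IsAffineHomogeneous.div {k l : ℕ} {f g : (ι → ℝ) → ℝ}
    (hf : IsAffineHomogeneous (k + l) f) (hg : IsAffineHomogeneous l g) :
    IsAffineHomogeneous k fun x => f x / g x := by
  intro r hr c x
  have hrl : r ^ l ≠ 0 := (pow_pos hr l).ne'
  simp only [hf hr c x, hg hr c x, smul_eq_mul]
  rw [add_comm, pow_add, mul_assoc, mul_div_mul_left _ _ hrl, mul_div_assoc]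

end AffineHomogeneous

section Scaling

variable {ι E : Type*} [Fintype ι] [NormedAddCommGroup E] [NormedSpace ℝ E]

theorem IsAffineHomogeneous.setIntegral_cube {k : ℕ} {f : (ι → ℝ) → E}
    (hf : IsAffineHomogeneous k f) {a b : ℝ} (hab : a < b) :
    ∫ x in cube ι a b, f x = (b - a) ^ (Fintype.card ι + k) • ∫ x in cube ι 0 1, f x := by
  have hr : 0 < b - a := sub_pos.2 hab
  have htrans : ∫ x in cube ι 0 (b - a), f (x + fun _ => a) = ∫ x in cube ι a b, f x := by
    rw [← (measurePreserving_add_right volume _).setIntegral_preimage_emb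
      (measurableEmbedding_addRight _) f, preimage_add_const_cube, sub_self]
  have hsmul := Measure.setIntegral_comp_smul_of_pos volume (fun x => f (x + fun _ => a))
    (cube ι 0 1) hr
  simp only [hf hr, integral_smul, smul_cube hr, mul_zero, mul_one, htrans,
    Module.finrank_fintype_fun_eq_card] at hsmul
  rw [pow_add, mul_smul, hsmul, smul_inv_smul₀ (pow_pos hr _).ne']

end Scaling

section SampleRange

variable {ι : Type*} [Fintype ι] [Nonempty ι] {x : ι → ℝ}

/-- The range `max x - min x` of a finite sample. -/
noncomputable def sampleRange (x : ι → ℝ) : ℝ :=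
  Finset.univ.sup' Finset.univ_nonempty x - Finset.univ.inf' Finset.univ_nonempty x

theorem continuous_sup'_univ :
    Continuous fun x : ι → ℝ => Finset.univ.sup' Finset.univ_nonempty x :=
  .finset_sup'_apply _ fun i _ => continuous_apply i

theorem continuous_inf'_univ :
    Continuous fun x : ι → ℝ => Finset.univ.inf' Finset.univ_nonempty x :=
  .finset_inf'_apply _ fun i _ => continuous_apply i

theorem continuous_one_sub_sup'_univ :
    Continuous fun x : ι → ℝ => 1 - Finset.univ.sup' Finset.univ_nonempty x :=
  continuous_const.sub continuous_sup'_univ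

theorem continuous_sampleRange : Continuous (sampleRange (ι := ι)) :=
  continuous_sup'_univ.sub continuous_inf'_univ

theorem abs_sub_le_sampleRange (x : ι → ℝ) (i j : ι) : |x i - x j| ≤ sampleRange x := by
  have hle (i : ι) := Finset.le_sup' x (Finset.mem_univ i)
  have hge (i : ι) := Finset.inf'_le x (Finset.mem_univ i)
  exact abs_sub_le_of_le_of_le (hge i) (hle i) (hge j) (hle j)

theorem sampleRange_nonneg (x : ι → ℝ) : 0 ≤ sampleRange x :=
  (abs_nonneg _).trans (abs_sub_le_sampleRange x (Classical.arbitrary ι) (Classical.arbitrary ι))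

theorem isAffineHomogeneous_sampleRange : IsAffineHomogeneous 1 (sampleRange (ι := ι)) := by
  intro r hr c x
  let φ : ℝ → ℝ := fun t => r * t + c
  have hφ : Monotone φ := fun s t hst => by dsimp only [φ]; gcongr
  have hsup := Finset.apply_sup'_eq_sup'_comp (f := x) Finset.univ_nonempty φ hφ.map_sup
  have hinf := Finset.apply_inf'_eq_inf'_comp (f := x) Finset.univ_nonempty φ hφ.map_inf
  calc
    sampleRange (r • x + fun _ => c) = φ _ - φ _ :=
      congrArg₂ (· - ·) hsup.symm hinf.symm
    _ = r ^ 1 • sampleRange x := by simp only [φ, sampleRange, smul_eq_mul]; ring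

theorem inf'_univ_mem_Icc {a b : ℝ} (hx : x ∈ cube ι a b) :
    Finset.univ.inf' Finset.univ_nonempty x ∈ Icc a b := by
  rw [mem_cube] at hx
  exact ⟨Finset.le_inf' _ _ fun i _ => (hx i).1,
    (Finset.inf'_le x (Finset.mem_univ (Classical.arbitrary ι))).trans (hx _).2⟩

theorem sup'_univ_mem_Icc {a b : ℝ} (hx : x ∈ cube ι a b) :
    Finset.univ.sup' Finset.univ_nonempty x ∈ Icc a b := by
  rw [mem_cube] at hx
  exact ⟨(hx _).1.trans (Finset.le_sup' x (Finset.mem_univ (Classical.arbitrary ι))),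
    Finset.sup'_le _ _ fun i _ => (hx i).2⟩

theorem setOf_le_inf'_univ_inter_cube {a b t : ℝ} (hat : a ≤ t) :
    {x | t ≤ Finset.univ.inf' Finset.univ_nonempty x} ∩ cube ι a b = cube ι t b := by
  ext x
  simp only [mem_inter_iff, mem_ofPred_eq, Finset.le_inf'_iff, Finset.mem_univ, true_imp_iff,
    mem_cube, ← forall_and]
  exact forall_congr' fun i => ⟨fun h => ⟨h.1, h.2.2⟩, fun h => ⟨h.1, hat.trans h.1, h.2⟩⟩

theorem setOf_sup'_univ_le_inter_cube {a b t : ℝ} (htb : t ≤ b) :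
    {x | Finset.univ.sup' Finset.univ_nonempty x ≤ t} ∩ cube ι a b = cube ι a t := by
  ext x
  simp only [mem_inter_iff, mem_ofPred_eq, Finset.sup'_le_iff, Finset.mem_univ, true_imp_iff,
    mem_cube, ← forall_and]
  exact forall_congr' fun i => ⟨fun h => ⟨h.2.1, h.1⟩, fun h => ⟨h.2, h.1, h.2.trans htb⟩⟩

section Integral

variable {E : Type*} [NormedAddCommGroup E] [NormedSpace ℝ E] [CompleteSpace E]
  {k : ℕ} {f : (ι → ℝ) → E}

theorem IsAffineHomogeneous.setIntegral_cube_inf'_smul (hf : IsAffineHomogeneous k f)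
    (hfi : IntegrableOn f (cube ι 0 1)) :
    ∫ x in cube ι 0 1, Finset.univ.inf' Finset.univ_nonempty x • f x =
      ((Fintype.card ι + k : ℕ) + 1 : ℝ)⁻¹ • ∫ x in cube ι 0 1, f x := by
  have hmeas := (continuous_inf'_univ (ι := ι)).measurable
  have hmem : ∀ᵐ x ∂volume.restrict (cube ι 0 1),
      Finset.univ.inf' Finset.univ_nonempty x ∈ Icc (0 : ℝ) 1 :=
    (ae_restrict_mem measurableSet_cube).mono fun _ hx => inf'_univ_mem_Icc hx
  refine integral_smul_eq_of_setIntegral_le_eq_pow hfi hmeas hmem fun t ht => ?_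
  rw [Measure.restrict_restrict (measurableSet_le measurable_const hmeas),
    setOf_le_inf'_univ_inter_cube ht.1, hf.setIntegral_cube ht.2]

theorem IsAffineHomogeneous.setIntegral_cube_one_sub_sup'_smul (hf : IsAffineHomogeneous k f)
    (hfi : IntegrableOn f (cube ι 0 1)) :
    ∫ x in cube ι 0 1, (1 - Finset.univ.sup' Finset.univ_nonempty x) • f x =
      ((Fintype.card ι + k : ℕ) + 1 : ℝ)⁻¹ • ∫ x in cube ι 0 1, f x := by
  have hmeas := (continuous_one_sub_sup'_univ (ι := ι)).measurable
  have hmem : ∀ᵐ x ∂volume.restrict (cube ι 0 1),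
      1 - Finset.univ.sup' Finset.univ_nonempty x ∈ Icc (0 : ℝ) 1 :=
    (ae_restrict_mem measurableSet_cube).mono fun _ hx =>
      Icc.one_sub_mem (sup'_univ_mem_Icc hx)
  refine integral_smul_eq_of_setIntegral_le_eq_pow hfi hmeas hmem fun t ht => ?_
  rw [Measure.restrict_restrict (measurableSet_le measurable_const hmeas)]
  simp only [le_sub_comm (a := t)]
  rw [setOf_sup'_univ_le_inter_cube (sub_le_self 1 ht.1), hf.setIntegral_cube (sub_pos.2 ht.2),
    sub_zero]

theorem IsAffineHomogeneous.setIntegral_cube_sampleRange_smul (hf : IsAffineHomogeneous k f)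
    (hfi : IntegrableOn f (cube ι 0 1)) :
    ∫ x in cube ι 0 1, sampleRange x • f x =
      ((Fintype.card ι + k - 1) / (Fintype.card ι + k + 1) : ℝ) • ∫ x in cube ι 0 1, f x := by
  have hsplit (x : ι → ℝ) : sampleRange x • f x =
      f x - Finset.univ.inf' Finset.univ_nonempty x • f x
        - (1 - Finset.univ.sup' Finset.univ_nonempty x) • f x := by
    rw [sampleRange]; module
  have hinf := hfi.continuousOn_smul continuous_inf'_univ.continuousOn isCompact_cube
  have hsup := hfi.continuousOn_smul continuous_one_sub_sup'_univ.continuousOn isCompact_cube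
  simp only [hsplit]
  rw [integral_sub (hfi.fun_sub hinf) hsup, integral_sub hfi hinf,
    hf.setIntegral_cube_inf'_smul hfi, hf.setIntegral_cube_one_sub_sup'_smul hfi]
  push_cast
  match_scalars
  field_simp
  ring

end Integral

end SampleRange

section SampleVariance

variable {ι : Type*} [Fintype ι]

/-- The sample variance, with Bessel's correction `1 / (n - 1)`. For a sample of size one the
junk value `1 / 0 = 0` makes it vanish. -/
noncomputable def sampleVariance (x : ι → ℝ) : ℝ :=
  1 / ((Fintype.card ι : ℝ) - 1) *
    ∑ i, (x i - 1 / (Fintype.card ι : ℝ) * ∑ j, x j) ^ 2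

theorem continuous_sampleVariance : Continuous (sampleVariance (ι := ι)) := by
  unfold sampleVariance
  fun_prop

variable [Nonempty ι]

theorem isAffineHomogeneous_sampleVariance :
    IsAffineHomogeneous 2 (sampleVariance (ι := ι)) := by
  intro r _ c x
  have hmean : 1 / (Fintype.card ι : ℝ) * ∑ j, (r * x j + c) =
      r * (1 / (Fintype.card ι : ℝ) * ∑ j, x j) + c := by
    rw [Finset.sum_add_distrib, ← Finset.mul_sum, Finset.sum_const, Finset.card_univ, nsmul_eq_mul]
    field_simp
  simp only [sampleVariance, Pi.add_apply, Pi.smul_apply, smul_eq_mul, hmean,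
    add_sub_add_right_eq_sub, ← mul_sub, mul_pow, ← Finset.mul_sum]
  ring

theorem isAffineHomogeneous_sampleVariance_div_sampleRange :
    IsAffineHomogeneous 1 fun x : ι → ℝ => sampleVariance x / sampleRange x :=
  isAffineHomogeneous_sampleVariance.div isAffineHomogeneous_sampleRange

theorem sampleVariance_eq_sum_sq_sub_sq_sum (x : ι → ℝ) :
    sampleVariance x = 1 / ((Fintype.card ι : ℝ) - 1) *
      (∑ i, x i ^ 2 - 1 / (Fintype.card ι : ℝ) * (∑ i, x i) ^ 2) := by
  simp only [sampleVariance, sub_sq, Finset.sum_add_distrib, Finset.sum_sub_distrib,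
    ← Finset.sum_mul, ← Finset.mul_sum, Finset.sum_const, Finset.card_univ, nsmul_eq_mul]
  field_simp
  ring

theorem card_sub_one_nonneg : 0 ≤ (Fintype.card ι : ℝ) - 1 :=
  sub_nonneg.2 (Nat.one_le_cast.2 Fintype.card_pos)

theorem sampleVariance_nonneg (x : ι → ℝ) : 0 ≤ sampleVariance x :=
  mul_nonneg (one_div_nonneg.2 card_sub_one_nonneg) (Finset.sum_nonneg fun _ _ => sq_nonneg _)

theorem abs_sub_mean_le_sampleRange (x : ι → ℝ) (i : ι) :
    |x i - 1 / (Fintype.card ι : ℝ) * ∑ j, x j| ≤ sampleRange x := by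
  have hmean : x i - 1 / (Fintype.card ι : ℝ) * ∑ j, x j =
      (∑ j, (x i - x j)) / Fintype.card ι := by
    rw [Finset.sum_sub_distrib, Finset.sum_const, Finset.card_univ, nsmul_eq_mul]
    field_simp
  rw [hmean, abs_div, Nat.abs_cast, div_le_iff₀' (by positivity)]
  calc
    |∑ j, (x i - x j)| ≤ ∑ j, |x i - x j| := Finset.abs_sum_le_sum_abs _ _
    _ ≤ ∑ _j : ι, sampleRange x := Finset.sum_le_sum fun j _ => abs_sub_le_sampleRange x i j
    _ = Fintype.card ι * sampleRange x := by simp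

theorem sampleVariance_le_mul_sampleRange_sq (x : ι → ℝ) :
    sampleVariance x ≤ Fintype.card ι / ((Fintype.card ι : ℝ) - 1) * sampleRange x ^ 2 := by
  have hdev (i : ι) : (x i - 1 / (Fintype.card ι : ℝ) * ∑ j, x j) ^ 2 ≤ sampleRange x ^ 2 :=
    sq_le_sq' (abs_le.1 (abs_sub_mean_le_sampleRange x i)).1
      (abs_le.1 (abs_sub_mean_le_sampleRange x i)).2
  calc
    sampleVariance x ≤ 1 / ((Fintype.card ι : ℝ) - 1) * ∑ _i : ι, sampleRange x ^ 2 :=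
      mul_le_mul_of_nonneg_left (Finset.sum_le_sum fun i _ => hdev i)
        (one_div_nonneg.2 card_sub_one_nonneg)
    _ = Fintype.card ι / ((Fintype.card ι : ℝ) - 1) * sampleRange x ^ 2 := by
      rw [Finset.sum_const, Finset.card_univ, nsmul_eq_mul]; ring

theorem sampleRange_mul_sampleVariance_div_sampleRange (x : ι → ℝ) :
    sampleRange x * (sampleVariance x / sampleRange x) = sampleVariance x := by
  refine mul_div_cancel_of_imp' fun hR => (sampleVariance_nonneg x).antisymm' ?_
  simpa [hR] using sampleVariance_le_mul_sampleRange_sq x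

theorem integrableOn_sampleVariance_div_sampleRange {s : Set (ι → ℝ)} (hs : IsCompact s) :
    IntegrableOn (fun x => sampleVariance x / sampleRange x) s := by
  have hbound : IntegrableOn
      (fun x => Fintype.card ι / ((Fintype.card ι : ℝ) - 1) * sampleRange x) s :=
    (continuous_sampleRange.const_mul _).continuousOn.integrableOn_compact hs
  refine hbound.mono' (continuous_sampleVariance.measurable.div
    continuous_sampleRange.measurable).aestronglyMeasurable (.of_forall fun x => ?_)
  have hR := sampleRange_nonneg x
  rw [Real.norm_of_nonneg (div_nonneg (sampleVariance_nonneg x) hR)]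
  refine div_le_of_le_mul₀ hR
    (mul_nonneg (div_nonneg (Nat.cast_nonneg _) card_sub_one_nonneg) hR) ?_
  rw [mul_assoc, ← sq]
  exact sampleVariance_le_mul_sampleRange_sq x

end SampleVariance

section Unbiased

variable {ι Ω : Type*} [Fintype ι] [MeasurableSpace Ω] {P : Measure Ω}
  {X : ι → Ω → ℝ} {m v : ℝ}

theorem integral_sq_eq_variance_add_sq [IsProbabilityMeasure P] {Y : Ω → ℝ} (hY : MemLp Y 2 P) :
    ∫ ω, Y ω ^ 2 ∂P = Var[Y; P] + (∫ ω, Y ω ∂P) ^ 2 := by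
  rw [variance_eq_sub hY]
  simp

theorem variance_sum_of_uncorrelated [IsFiniteMeasure P] (hX : ∀ i, MemLp (X i) 2 P)
    (hvar : ∀ i, Var[X i; P] = v) (hcov : Pairwise fun i j => cov[X i, X j; P] = 0) :
    Var[∑ i, X i; P] = Fintype.card ι * v := by
  have hrow (i : ι) : ∑ j, cov[X i, X j; P] = v := by
    rw [Finset.sum_eq_single i (fun j _ hji => hcov hji.symm) (by simp),
      covariance_self (hX i).aemeasurable, hvar]
  rw [variance_sum hX]
  simp [hrow]

theorem integral_sampleVariance_of_uncorrelated [Nontrivial ι] [IsProbabilityMeasure P]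
    (hX : ∀ i, MemLp (X i) 2 P) (hmean : ∀ i, ∫ ω, X i ω ∂P = m) (hvar : ∀ i, Var[X i; P] = v)
    (hcov : Pairwise fun i j => cov[X i, X j; P] = 0) :
    ∫ ω, sampleVariance (fun i => X i ω) ∂P = v := by
  have hS : MemLp (∑ i, X i) 2 P := memLp_finsetSum' _ fun i _ => hX i
  have hsq (i : ι) : ∫ ω, X i ω ^ 2 ∂P = v + m ^ 2 := by
    rw [integral_sq_eq_variance_add_sq (hX i), hvar, hmean]
  have hsum_sq : ∫ ω, (∑ i, X i ω) ^ 2 ∂P =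
      Fintype.card ι * v + (Fintype.card ι * m) ^ 2 := by
    have hsum : ∫ ω, ∑ i, X i ω ∂P = Fintype.card ι * m := by
      rw [integral_finsetSum _ fun i _ => (hX i).integrable one_le_two]
      simp [hmean]
    simpa [variance_sum_of_uncorrelated hX hvar hcov, hsum] using integral_sq_eq_variance_add_sq hS
  have hcard : (Fintype.card ι : ℝ) - 1 ≠ 0 :=
    (sub_pos.2 (Nat.one_lt_cast.2 Fintype.one_lt_card)).ne'
  have hS_sq : Integrable (fun ω => (∑ i, X i ω) ^ 2) P := by simpa using hS.integrable_sq
  simp only [sampleVariance_eq_sum_sq_sub_sq_sum]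
  rw [integral_const_mul, integral_sub (integrable_finsetSum _ fun i _ => (hX i).integrable_sq)
    (hS_sq.const_mul _), integral_const_mul, integral_finsetSum _ fun i _ => (hX i).integrable_sq,
    hsum_sq]
  simp only [hsq, Finset.sum_const, Finset.card_univ, nsmul_eq_mul]
  field_simp
  ring

theorem integral_pi_sampleVariance [Nontrivial ι] {ν : Measure ℝ} [IsProbabilityMeasure ν]
    (hν : MemLp id 2 ν) :
    ∫ x : ι → ℝ, sampleVariance x ∂Measure.pi (fun _ => ν) = Var[id; ν] := by
  have heval (i : ι) := measurePreserving_eval (fun _ : ι => ν) i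
  have hX (i : ι) : MemLp (fun x : ι → ℝ => x i) 2 (Measure.pi fun _ => ν) :=
    hν.comp_measurePreserving (heval i)
  have hindep : iIndepFun (fun i (x : ι → ℝ) => x i) (Measure.pi fun _ => ν) :=
    iIndepFun_pi fun _ => aemeasurable_id
  refine integral_sampleVariance_of_uncorrelated (m := ∫ t, t ∂ν) hX (fun i => ?_) (fun i => ?_)
    fun i j hij => (hindep.indepFun hij).covariance_eq_zero (hX i) (hX j)
  · exact integral_comp_eval (μ := fun _ : ι => ν) aestronglyMeasurable_id
  · exact (heval i).variance_fun_comp aemeasurable_id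

end Unbiased

section UniformDistribution

theorem variance_id_restrict_Icc_zero_one : Var[id; volume.restrict (Icc (0 : ℝ) 1)] = 1 / 12 := by
  have hmean : ∫ t in Icc (0 : ℝ) 1, t = 1 / 2 := by
    rw [integral_Icc_eq_integral_Ioc, ← intervalIntegral.integral_of_le zero_le_one, integral_id]
    norm_num
  rw [variance_eq_integral aemeasurable_id]
  simp only [id, hmean]
  rw [integral_Icc_eq_integral_Ioc, ← intervalIntegral.integral_of_le zero_le_one,
    intervalIntegral.integral_comp_sub_right (fun t => t ^ 2)]
  norm_num

variable {ι : Type*} [Fintype ι] [Nontrivial ι]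

theorem setIntegral_cube_sampleVariance : ∫ x in cube ι 0 1, sampleVariance x = 1 / 12 := by
  have : IsProbabilityMeasure (volume.restrict (Icc (0 : ℝ) 1)) := ⟨by simp⟩
  have hid : MemLp id 2 (volume.restrict (Icc (0 : ℝ) 1)) :=
    memLp_of_bounded (ae_restrict_mem measurableSet_Icc) aestronglyMeasurable_id 2
  rw [cube, volume_pi, Measure.restrict_pi_pi, integral_pi_sampleVariance hid,
    variance_id_restrict_Icc_zero_one]

theorem setIntegral_cube_sampleVariance_div_sampleRange :
    ∫ x in cube ι 0 1, sampleVariance x / sampleRange x =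
      ((Fintype.card ι : ℝ) + 2) / (12 * Fintype.card ι) := by
  have hkey := (isAffineHomogeneous_sampleVariance_div_sampleRange
    (ι := ι)).setIntegral_cube_sampleRange_smul
    (integrableOn_sampleVariance_div_sampleRange isCompact_cube)
  simp only [smul_eq_mul, sampleRange_mul_sampleVariance_div_sampleRange,
    setIntegral_cube_sampleVariance, Nat.cast_one, add_sub_cancel_right] at hkey
  field_simp at hkey ⊢
  linarith

theorem average_variance_to_range_ratio_general {a b : ℝ} (hab : a < b) :
    1 / (b - a) ^ Fintype.card ι * ∫ x in cube ι a b, sampleVariance x / sampleRange x =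
      ((Fintype.card ι : ℝ) + 2) / (12 * Fintype.card ι) * (b - a) := by
  have hba : b - a ≠ 0 := (sub_pos.2 hab).ne'
  rw [isAffineHomogeneous_sampleVariance_div_sampleRange.setIntegral_cube hab,
    setIntegral_cube_sampleVariance_div_sampleRange, smul_eq_mul]
  field_simp
  ring

end UniformDistribution

/-- Formula (3): the average value over `[a,b]^n` of the variance-to-range ratio is
`((n+2)/(12n))(b−a)`, where `s²(x) = (1/(n−1)) Σ_i (x_i − (1/n) Σ_j x_j)²`. -/
theorem average_variance_to_range_ratio (a b : ℝ) (hab : a < b) (n : ℕ) (hn : 2 ≤ n) :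
    (1 / (b - a) ^ n) *
        ∫ x in Set.univ.pi fun _ : Fin n => Set.Icc a b,
          (1 / ((n : ℝ) - 1) * ∑ i : Fin n, (x i - 1 / (n : ℝ) * ∑ j : Fin n, x j) ^ 2) /
            (Finset.univ.sup' ⟨⟨0, by omega⟩, Finset.mem_univ _⟩ x -
              Finset.univ.inf' ⟨⟨0, by omega⟩, Finset.mem_univ _⟩ x)
      = ((n : ℝ) + 2) / (12 * (n : ℝ)) * (b - a) := by
  have : Nontrivial (Fin n) := Fin.nontrivial_iff_two_le.2 hn
  simpa only [sampleVariance, sampleRange, cube, Fintype.card_fin] using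
    average_variance_to_range_ratio_general (ι := Fin n) hab
end

section
/- Let n ≥ 3 and let G(x) = (∏_{i=1}^n x_i)^{1/n} be the geometric mean on (0,1)^n. Then the orness average value of G over [0,1]^n equals n(n−1)(n/(n+1))^{n−2} ∫_0^1 x^n (1−x^{n+1})^{n−2}/(1−x^n) dx − 1/(n−2). -/
open MeasureTheory

/-!
Both extremal coordinates of a random point can be split off by symmetry. The orness distribution
function of a symmetric and positively homogeneous function is symmetric and scale invariant, so
rescaling the maximum to `1` and averaging over it costs nothing. Taking the minimum `t` of the
remaining coordinates as the next one makes the denominator the constant `1 - t`, and the integral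
of `G` over the other `n - 2` coordinates becomes a product of integrals of `z ^ (1 / n)` over
`(t, 1)`. The substitution `t = u ^ n` turns this term into the stated integral; the contribution
of the minimum is the beta integral of `t * (1 - t) ^ (n - 3)`.
-/

section LeadingCoordinate

variable {α : Type*} {r : α → α → Prop} {n : ℕ}

/-- The pairs `(b, z)` whose first entry dominates every coordinate of `z` with respect to `r`.
Taking `<` or `>` for `r` makes `b` the strict maximum or the strict minimum of `Fin.cons b z`,
so that both extremal coordinates can be split off by the same argument. -/
def leadingRegion (r : α → α → Prop) (n : ℕ) : Set (α × (Fin n → α)) :=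
  {p | ∀ j, r (p.2 j) p.1}

theorem eq_of_removeNth_mem_leadingRegion [Std.Asymm r] {x : Fin (n + 1) → α} {i j : Fin (n + 1)}
    (hi : (x i, i.removeNth x) ∈ leadingRegion r n)
    (hj : (x j, j.removeNth x) ∈ leadingRegion r n) : i = j := by
  by_contra hij
  obtain ⟨k, rfl⟩ := Fin.exists_succAbove_eq (Ne.symm hij)
  obtain ⟨l, hl⟩ := Fin.exists_succAbove_eq hij
  have hlt := hj l
  simp only [Fin.removeNth_apply, hl] at hlt
  exact asymm_of r (hi k) hlt

theorem exists_removeNth_mem_leadingRegion [IsStrictTotalOrder α r] {x : Fin (n + 1) → α}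
    (hx : Function.Injective x) : ∃ i, (x i, i.removeNth x) ∈ leadingRegion r n := by
  classical
  let := linearOrderOfSTO r
  obtain ⟨i, hi⟩ := Finite.exists_max x
  exact ⟨i, fun j => (hi (i.succAbove j)).lt_of_ne (hx.ne (i.succAbove_ne j))⟩

variable [MeasurableSpace α]

theorem measurableSet_leadingRegion (hr : MeasurableSet {p : α × α | r p.1 p.2}) :
    MeasurableSet (leadingRegion r n) := by
  simp only [leadingRegion, Set.ofPred_forall]
  exact .iInter fun j => hr.preimage (f := fun p : α × (Fin n → α) => (p.2 j, p.1)) (by fun_prop)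

theorem measurableEq_of_measurableSet_rel [IsStrictTotalOrder α r]
    (hr : MeasurableSet {p : α × α | r p.1 p.2}) : MeasurableEq α where
  measurableSet_diagonal := by
    have hdiag : Set.diagonal α =
        {p : α × α | r p.1 p.2}ᶜ ∩ (Prod.swap ⁻¹' {p : α × α | r p.1 p.2})ᶜ := by
      ext ⟨a, b⟩
      refine ⟨fun h => ?_, fun h => Std.Trichotomous.trichotomous (r := r) a b h.1 h.2⟩
      obtain rfl : a = b := h
      exact ⟨irrefl_of r a, irrefl_of r a⟩
    rw [hdiag]
    exact hr.compl.inter (hr.preimage measurable_swap).compl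

variable (μ : Measure α) [SigmaFinite μ]

theorem ae_pi_injective [MeasurableEq α] [NullSingletonClass μ] :
    ∀ᵐ x ∂Measure.pi fun _ : Fin n => μ, Function.Injective x := by
  cases n with
  | zero => exact .of_forall fun x => Function.injective_of_subsingleton x
  | succ n =>
    have hne : ∀ i : Fin (n + 1), ∀ᵐ x ∂Measure.pi fun _ : Fin (n + 1) => μ,
        ∀ j, i.removeNth x j ≠ x i := fun i => by
      refine (measurePreserving_piFinSuccAbove (fun _ => μ) i).quasiMeasurePreserving.ae
        (p := fun p => ∀ j, p.2 j ≠ p.1) ?_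
      refine (Measure.ae_prod_iff_ae_ae ?_).2 (.of_forall fun b =>
        ae_all_iff.2 fun j => Measure.ae_eval_ne (fun _ => μ) j b)
      simp only [Set.ofPred_forall]
      exact .iInter fun j => (measurableSet_eq_fun (by fun_prop) (by fun_prop)).compl
    filter_upwards [ae_all_iff.2 hne] with x hx i j hij
    by_contra h
    obtain ⟨k, rfl⟩ := Fin.exists_succAbove_eq h
    exact hx j k hij

variable {E : Type*} [NormedAddCommGroup E] [NormedSpace ℝ E]

theorem setIntegral_leadingRegion (hr : MeasurableSet {p : α × α | r p.1 p.2})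
    {g : α × (Fin n → α) → E} (hg : Integrable g (μ.prod (Measure.pi fun _ => μ))) :
    ∫ p in leadingRegion r n, g p ∂μ.prod (Measure.pi fun _ => μ) =
      ∫ b, ∫ z, g (b, z) ∂Measure.pi (fun _ => μ.restrict {c | r c b}) ∂μ := by
  have hR := measurableSet_leadingRegion (n := n) hr
  rw [← integral_indicator hR, integral_prod _ (hg.indicator hR)]
  refine integral_congr_ae (.of_forall fun b => ?_)
  have hslice : Prod.mk b ⁻¹' leadingRegion r n = Set.univ.pi fun _ => {c | r c b} := by
    ext z
    simp [leadingRegion]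
  simp only [← Measure.restrict_pi_pi, ← hslice]
  exact integral_indicator (measurable_prodMk_left hR)

/-- The coordinates are almost surely distinct, and by symmetry each of them is equally likely to
be the leading one. -/
theorem integral_pi_eq_smul_integral_cons [IsStrictTotalOrder α r] [NullSingletonClass μ]
    (hr : MeasurableSet {p : α × α | r p.1 p.2}) {f : (Fin (n + 1) → α) → E}
    (hsymm : ∀ (σ : Equiv.Perm (Fin (n + 1))) x, f (x ∘ σ) = f x)
    (hf : Integrable f (Measure.pi fun _ => μ)) :
    ∫ x, f x ∂Measure.pi (fun _ => μ) = (n + 1 : ℝ) •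
      ∫ b, ∫ z, f (Fin.cons b z) ∂Measure.pi (fun _ => μ.restrict {c | r c b}) ∂μ := by
  have := measurableEq_of_measurableSet_rel hr
  let e (i : Fin (n + 1)) := MeasurableEquiv.piFinSuccAbove (fun _ => α) i
  have he (i) : MeasurePreserving (e i) (Measure.pi fun _ => μ) (μ.prod (Measure.pi fun _ => μ)) :=
    measurePreserving_piFinSuccAbove (fun _ => μ) i
  let g (p : α × (Fin n → α)) : E := f (Fin.cons p.1 p.2)
  have hfg (i) : f = g ∘ e i := funext fun x => by
    change f x = f (Fin.cons (x i) (i.removeNth x))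
    rw [Fin.cons_removeNth_eq_comp_cycleRange_symm, hsymm]
  have hg : Integrable g (μ.prod (Measure.pi fun _ => μ)) := by
    rwa [← (he 0).integrable_comp_emb (e 0).measurableEmbedding, ← hfg 0]
  have hcover : (⋃ i, e i ⁻¹' leadingRegion r n) =ᵐ[Measure.pi fun _ => μ] Set.univ := by
    filter_upwards [ae_pi_injective μ] with x hx
    exact propext (iff_true_intro (Set.mem_iUnion.2 (exists_removeNth_mem_leadingRegion hx)))
  calc ∫ x, f x ∂Measure.pi (fun _ => μ)
      = ∫ x in ⋃ i, e i ⁻¹' leadingRegion r n, f x ∂Measure.pi (fun _ => μ) := by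
        rw [setIntegral_congr_set hcover, setIntegral_univ]
    _ = ∑ i, ∫ x in e i ⁻¹' leadingRegion r n, f x ∂Measure.pi (fun _ => μ) :=
        integral_iUnion_fintype (fun i => (e i).measurable (measurableSet_leadingRegion hr))
          (fun i j hij => Set.disjoint_left.2 fun x hi hj =>
            hij (eq_of_removeNth_mem_leadingRegion hi hj)) fun i => hf.integrableOn
    _ = ∑ _i : Fin (n + 1), ∫ p in leadingRegion r n, g p ∂μ.prod (Measure.pi fun _ => μ) := by
        refine Finset.sum_congr rfl fun i _ => ?_
        rw [hfg i]
        exact (he i).setIntegral_preimage_emb (e i).measurableEmbedding g _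
    _ = _ := by
        rw [setIntegral_leadingRegion μ hr hg, Finset.sum_const, Finset.card_univ,
          Fintype.card_fin, ← Nat.cast_smul_eq_nsmul ℝ, Nat.cast_succ]

end LeadingCoordinate

theorem apply_cons_comp_perm {α β : Type*} {n : ℕ} {f : (Fin (n + 1) → α) → β}
    (hsymm : ∀ (σ : Equiv.Perm (Fin (n + 1))) x, f (x ∘ σ) = f x) (c : α)
    (σ : Equiv.Perm (Fin n)) (x : Fin n → α) : f (Fin.cons c (x ∘ σ)) = f (Fin.cons c x) := by
  have hcons : (Fin.cons c (x ∘ σ) : Fin (n + 1) → α) =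
      Fin.cons c x ∘ Equiv.Perm.decomposeFin.symm (0, σ) := by
    ext i
    cases i using Fin.cases <;> simp
  rw [hcons, hsymm]

theorem integrableOn_pi_Ioo_of_norm_le {ι E : Type*} [Fintype ι] [NormedAddCommGroup E]
    {a b C : ℝ} {f : (ι → ℝ) → E} (hf : AEStronglyMeasurable f)
    (hC : ∀ x, (∀ i, x i ∈ Set.Ioo a b) → ‖f x‖ ≤ C) :
    IntegrableOn f (Set.univ.pi fun _ => Set.Ioo a b) := by
  refine Measure.integrableOn_of_bounded ?_ hf
    ((ae_restrict_iff' (.univ_pi fun _ => measurableSet_Ioo)).2 (.of_forall fun x hx =>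
      hC x fun i => hx i trivial))
  simp [volume_pi_pi, ENNReal.pow_eq_top_iff]

section Cube

open scoped Pointwise

variable {E : Type*} [NormedAddCommGroup E] [NormedSpace ℝ E] {n : ℕ} {a b : ℝ}
  {f : (Fin (n + 1) → ℝ) → E}

theorem setIntegral_pi_Ioo_eq_smul_setIntegral_cons_max
    (hsymm : ∀ (σ : Equiv.Perm (Fin (n + 1))) x, f (x ∘ σ) = f x)
    (hf : IntegrableOn f (Set.univ.pi fun _ => Set.Ioo a b)) :
    ∫ x in Set.univ.pi fun _ => Set.Ioo a b, f x = (n + 1 : ℝ) •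
      ∫ t in Set.Ioo a b, ∫ z in Set.univ.pi fun _ => Set.Ioo a t, f (Fin.cons t z) := by
  simp only [IntegrableOn, volume_pi, Measure.restrict_pi_pi] at hf ⊢
  rw [integral_pi_eq_smul_integral_cons (r := (· < ·)) _ measurableSet_lt' hsymm hf]
  congr 1
  refine setIntegral_congr_fun measurableSet_Ioo fun t ht => ?_
  have hslice : (volume.restrict (Set.Ioo a b)).restrict {c | c < t} =
      volume.restrict (Set.Ioo a t) := by
    rw [Measure.restrict_restrict (by exact measurableSet_Iio)]
    congr 1
    ext c
    exact ⟨fun h => ⟨h.2.1, h.1⟩, fun h => ⟨h.2, h.1, h.2.trans ht.2⟩⟩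
  simp only [hslice]

theorem setIntegral_pi_Ioo_eq_smul_setIntegral_cons_min
    (hsymm : ∀ (σ : Equiv.Perm (Fin (n + 1))) x, f (x ∘ σ) = f x)
    (hf : IntegrableOn f (Set.univ.pi fun _ => Set.Ioo a b)) :
    ∫ x in Set.univ.pi fun _ => Set.Ioo a b, f x = (n + 1 : ℝ) •
      ∫ t in Set.Ioo a b, ∫ z in Set.univ.pi fun _ => Set.Ioo t b, f (Fin.cons t z) := by
  simp only [IntegrableOn, volume_pi, Measure.restrict_pi_pi] at hf ⊢
  rw [integral_pi_eq_smul_integral_cons (r := (· > ·)) _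
    (measurableSet_lt'.preimage measurable_swap) hsymm hf]
  congr 1
  refine setIntegral_congr_fun measurableSet_Ioo fun t ht => ?_
  have hslice : (volume.restrict (Set.Ioo a b)).restrict {c | c > t} =
      volume.restrict (Set.Ioo t b) := by
    rw [Measure.restrict_restrict (by exact measurableSet_Ioi)]
    congr 1
    ext c
    exact ⟨fun h => ⟨h.1, h.2.2⟩, fun h => ⟨h.1, ht.1.trans h.1, h.2⟩⟩
  simp only [hslice]

theorem setIntegral_pi_Ioo_zero_eq_smul (g : (Fin n → ℝ) → E) (hb : 0 < b) :
    ∫ x in Set.univ.pi fun _ => Set.Ioo 0 b, g x =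
      b ^ n • ∫ x in Set.univ.pi fun _ => Set.Ioo 0 1, g (b • x) := by
  have hbox : b • (Set.univ.pi fun _ : Fin n => Set.Ioo (0 : ℝ) 1) =
      Set.univ.pi fun _ => Set.Ioo 0 b := by
    rw [smul_univ_pi]
    congr 1
    ext1 i
    simp [LinearOrderedField.smul_Ioo hb]
  rw [Measure.setIntegral_comp_smul_of_pos _ _ _ hb, hbox, Module.finrank_fin_fun,
    smul_inv_smul₀ (pow_ne_zero n hb.ne')]

/-- By symmetry the maximum may be taken to be the first coordinate; after rescaling it to `1`,
its density `(n + 1) * b ^ n` integrates to `1`. -/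
theorem setIntegral_pi_Ioo_zero_one_of_scale_invariant [CompleteSpace E]
    (hsymm : ∀ (σ : Equiv.Perm (Fin (n + 1))) x, f (x ∘ σ) = f x)
    (hscale : ∀ c : ℝ, 0 < c → ∀ x, (∀ i, 0 < x i) → f (c • x) = f x)
    (hf : IntegrableOn f (Set.univ.pi fun _ => Set.Ioo 0 1)) :
    ∫ x in Set.univ.pi fun _ => Set.Ioo 0 1, f x =
      ∫ z in Set.univ.pi fun _ => Set.Ioo 0 1, f (Fin.cons 1 z) := by
  have hinner : ∀ b ∈ Set.Ioo (0 : ℝ) 1,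
      ∫ z in Set.univ.pi fun _ => Set.Ioo 0 b, f (Fin.cons b z) =
        b ^ n • ∫ z in Set.univ.pi fun _ => Set.Ioo 0 1, f (Fin.cons 1 z) := by
    intro b hb
    rw [setIntegral_pi_Ioo_zero_eq_smul _ hb.1]
    congr 1
    refine setIntegral_congr_fun (.univ_pi fun _ => measurableSet_Ioo) fun z hz => ?_
    have hcons : (Fin.cons b (b • z) : Fin (n + 1) → ℝ) = b • Fin.cons 1 z := by
      ext i
      cases i using Fin.cases <;> simp
    simp only [hcons]
    refine hscale b hb.1 _ fun i => ?_
    cases i using Fin.cases with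
    | zero => simp
    | succ i => simpa using (hz i trivial).1
  have hdensity : ∫ b in Set.Ioo (0 : ℝ) 1, b ^ n = (n + 1 : ℝ)⁻¹ := by
    rw [← integral_Ioc_eq_integral_Ioo, ← intervalIntegral.integral_of_le zero_le_one]
    simp
  rw [setIntegral_pi_Ioo_eq_smul_setIntegral_cons_max hsymm hf,
    setIntegral_congr_fun measurableSet_Ioo hinner, integral_smul_const, hdensity,
    smul_inv_smul₀ (by positivity)]

end Cube

section OrnessDistribution

variable {ι : Type*} [Fintype ι] [Nonempty ι] {F : (ι → ℝ) → ℝ} {x : ι → ℝ}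

/-- The orness distribution function of `F`, which locates `F x` between `min x` and `max x`.
It takes the junk value `0` on the diagonal, which is a null set. -/
noncomputable def ornessDistribution (F : (ι → ℝ) → ℝ) (x : ι → ℝ) : ℝ :=
  (F x - Finset.univ.inf' Finset.univ_nonempty x) /
    (Finset.univ.sup' Finset.univ_nonempty x - Finset.univ.inf' Finset.univ_nonempty x)

theorem ornessDistribution_comp_perm (σ : Equiv.Perm ι) (hF : F (x ∘ σ) = F x) :
    ornessDistribution F (x ∘ σ) = ornessDistribution F x := by
  simp only [ornessDistribution, hF, Finset.sup'_univ_eq_ciSup, Finset.inf'_univ_eq_ciInf]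
  exact congrArg₂ (fun m M => (F x - m) / (M - m)) (σ.iInf_comp (g := x)) (σ.iSup_comp (g := x))

theorem ornessDistribution_smul {c : ℝ} (hc : 0 < c) (hF : F (c • x) = c * F x) :
    ornessDistribution F (c • x) = ornessDistribution F x := by
  have hsup : Finset.univ.sup' Finset.univ_nonempty (c • x) =
      c * Finset.univ.sup' Finset.univ_nonempty x := (Finset.mul₀_sup' hc.le x _ _).symm
  have hinf : Finset.univ.inf' Finset.univ_nonempty (c • x) =
      c * Finset.univ.inf' Finset.univ_nonempty x :=
    (map_finset_inf' (OrderIso.mulLeft₀ c hc) _ x).symm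
  rw [ornessDistribution, hF, hsup, hinf, ← mul_sub, ← mul_sub, mul_div_mul_left _ _ hc.ne',
    ornessDistribution]

theorem ornessDistribution_mem_Icc (hF : F x ∈ Set.Icc (Finset.univ.inf' Finset.univ_nonempty x)
    (Finset.univ.sup' Finset.univ_nonempty x)) : ornessDistribution F x ∈ Set.Icc 0 1 :=
  ⟨div_nonneg (sub_nonneg.2 hF.1) (sub_nonneg.2 (hF.1.trans hF.2)),
    div_le_one_of_le₀ (sub_le_sub_right hF.2 _) (sub_nonneg.2 (hF.1.trans hF.2))⟩

theorem measurable_ornessDistribution (hF : Measurable F) : Measurable (ornessDistribution F) := by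
  unfold ornessDistribution
  simp only [Finset.sup'_univ_eq_ciSup, Finset.inf'_univ_eq_ciInf]
  fun_prop

theorem ornessDistribution_cons_cons {n : ℕ} {F : (Fin (n + 2) → ℝ) → ℝ} {a b : ℝ}
    {z : Fin n → ℝ} (hab : a ≤ b) (hz : ∀ i, z i ∈ Set.Icc a b) :
    ornessDistribution F (Fin.cons b (Fin.cons a z)) =
      (F (Fin.cons b (Fin.cons a z)) - a) / (b - a) := by
  have hsup : Finset.univ.sup' Finset.univ_nonempty
      (Fin.cons b (Fin.cons a z) : Fin (n + 2) → ℝ) = b := by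
    refine le_antisymm (Finset.sup'_le _ _ fun i _ => ?_)
      (Finset.le_sup' (Fin.cons b (Fin.cons a z) : Fin (n + 2) → ℝ) (Finset.mem_univ 0))
    refine Fin.cases le_rfl (fun i => Fin.cases hab (fun i => ?_) i) i
    exact (hz i).2
  have hinf : Finset.univ.inf' Finset.univ_nonempty
      (Fin.cons b (Fin.cons a z) : Fin (n + 2) → ℝ) = a := by
    refine le_antisymm
      (Finset.inf'_le (Fin.cons b (Fin.cons a z) : Fin (n + 2) → ℝ) (Finset.mem_univ 1))
      (Finset.le_inf' _ _ fun i _ => ?_)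
    refine Fin.cases hab (fun i => Fin.cases le_rfl (fun i => ?_) i) i
    exact (hz i).1
  rw [ornessDistribution, hsup, hinf]

theorem setIntegral_ornessDistribution {n : ℕ} {F : (Fin (n + 2) → ℝ) → ℝ}
    (hmeas : Measurable F) (hsymm : ∀ (σ : Equiv.Perm (Fin (n + 2))) x, F (x ∘ σ) = F x)
    (hhom : ∀ c : ℝ, 0 < c → ∀ x, (∀ i, 0 < x i) → F (c • x) = c * F x)
    (hinternal : ∀ x, (∀ i, 0 < x i) → F x ∈ Set.Icc (Finset.univ.inf' Finset.univ_nonempty x)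
      (Finset.univ.sup' Finset.univ_nonempty x)) :
    ∫ x in Set.univ.pi fun _ => Set.Ioo 0 1, ornessDistribution F x =
      (n + 1) * ∫ t in Set.Ioo (0 : ℝ) 1, ∫ z in Set.univ.pi fun _ => Set.Ioo t 1,
        (F (Fin.cons 1 (Fin.cons t z)) - t) / (1 - t) := by
  have hodf_symm : ∀ (σ : Equiv.Perm (Fin (n + 2))) x,
      ornessDistribution F (x ∘ σ) = ornessDistribution F x :=
    fun σ x => ornessDistribution_comp_perm σ (hsymm σ x)
  have hodf_meas := measurable_ornessDistribution hmeas
  have hodf_bound : ∀ x : Fin (n + 2) → ℝ, (∀ i, 0 < x i) → ‖ornessDistribution F x‖ ≤ 1 :=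
    fun x hx => by
      have hmem := ornessDistribution_mem_Icc (hinternal x hx)
      rw [Real.norm_of_nonneg hmem.1]
      exact hmem.2
  have hmeas_cons : Measurable fun z : Fin (n + 1) → ℝ => (Fin.cons 1 z : Fin (n + 2) → ℝ) := by
    fun_prop
  calc ∫ x in Set.univ.pi fun _ => Set.Ioo 0 1, ornessDistribution F x
      = ∫ z in Set.univ.pi fun _ => Set.Ioo 0 1, ornessDistribution F (Fin.cons 1 z) :=
        setIntegral_pi_Ioo_zero_one_of_scale_invariant hodf_symm
          (fun c hc x hx => ornessDistribution_smul hc (hhom c hc x hx))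
          (integrableOn_pi_Ioo_of_norm_le hodf_meas.aestronglyMeasurable fun x hx =>
            hodf_bound x fun i => (hx i).1)
    _ = (n + 1) * ∫ t in Set.Ioo (0 : ℝ) 1, ∫ z in Set.univ.pi fun _ => Set.Ioo t 1,
          ornessDistribution F (Fin.cons 1 (Fin.cons t z)) :=
        setIntegral_pi_Ioo_eq_smul_setIntegral_cons_min (apply_cons_comp_perm hodf_symm 1)
          (integrableOn_pi_Ioo_of_norm_le (hodf_meas.comp hmeas_cons).aestronglyMeasurable
            fun z hz => hodf_bound _ fun i => Fin.cases one_pos (fun i => (hz i).1) i)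
    _ = _ := by
        congr 1
        refine setIntegral_congr_fun measurableSet_Ioo fun t ht =>
          setIntegral_congr_fun (.univ_pi fun _ => measurableSet_Ioo) fun z hz =>
            ornessDistribution_cons_cons ht.2.le fun i => Set.Ioo_subset_Icc_self (hz i trivial)

end OrnessDistribution

section Integrals

theorem setIntegral_Ioo_zero_one_eq_setIntegral_pow {E : Type*} [NormedAddCommGroup E]
    [NormedSpace ℝ E] {n : ℕ} (hn : n ≠ 0) (g : ℝ → E) :
    ∫ t in Set.Ioo (0 : ℝ) 1, g t =
      ∫ u in Set.Ioo (0 : ℝ) 1, (n * u ^ (n - 1)) • g (u ^ n) := by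
  have himage : (fun u : ℝ => u ^ n) '' Set.Ioo 0 1 = Set.Ioo 0 1 := by
    refine Set.Subset.antisymm (Set.image_subset_iff.2 fun u hu =>
      ⟨pow_pos hu.1 n, pow_lt_one₀ hu.1.le hu.2 hn⟩) fun t ht => ?_
    exact ⟨t ^ (n⁻¹ : ℝ), ⟨Real.rpow_pos_of_pos ht.1 _,
      Real.rpow_lt_one ht.1.le ht.2 (by positivity)⟩, Real.rpow_inv_natCast_pow ht.1.le hn⟩
  have hmono : MonotoneOn (fun u : ℝ => u ^ n) (Set.Ioo 0 1) :=
    fun u hu v _ huv => pow_le_pow_left₀ hu.1.le huv n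
  rw [← integral_image_eq_integral_deriv_smul_of_monotoneOn measurableSet_Ioo
    (fun u _ => (hasDerivAt_pow n u).hasDerivWithinAt) hmono, himage]

theorem integrableOn_pi_Ioo_prod_rpow {ι : Type*} [Fintype ι] {a b p : ℝ} (hp : -1 < p) :
    IntegrableOn (fun z : ι → ℝ => ∏ i, z i ^ p) (Set.univ.pi fun _ => Set.Ioo a b) := by
  have hcoord : IntegrableOn (fun x : ℝ => x ^ p) (Set.Ioo a b) :=
    (intervalIntegral.intervalIntegrable_rpow' hp).def'.mono_set
      (Set.Ioo_subset_Ioc_self.trans Set.Ioc_subset_uIoc)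
  rw [IntegrableOn, volume_pi, Measure.restrict_pi_pi]
  exact Integrable.fintype_prod fun _ => hcoord

theorem setIntegral_pi_Ioo_prod_rpow {ι : Type*} [Fintype ι] {a b p : ℝ} (hab : a ≤ b)
    (hp : -1 < p) :
    ∫ z in Set.univ.pi fun _ : ι => Set.Ioo a b, ∏ i, z i ^ p =
      ((b ^ (p + 1) - a ^ (p + 1)) / (p + 1)) ^ Fintype.card ι := by
  rw [volume_pi, Measure.restrict_pi_pi, integral_fintype_prod_eq_pow fun x : ℝ => x ^ p,
    ← integral_Ioc_eq_integral_Ioo, ← intervalIntegral.integral_of_le hab,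
    integral_rpow (.inl hp)]

theorem setIntegral_Ioo_mul_one_sub_pow (m : ℕ) :
    ∫ t in Set.Ioo (0 : ℝ) 1, t * (1 - t) ^ m = 1 / ((m + 1) * (m + 2)) := by
  rw [← integral_Ioc_eq_integral_Ioo, ← intervalIntegral.integral_of_le zero_le_one]
  calc ∫ t in (0 : ℝ)..1, t * (1 - t) ^ m
      = ∫ s in (0 : ℝ)..1, (1 - s) * s ^ m := by
        simpa using intervalIntegral.integral_comp_sub_left (a := 0) (b := 1)
          (fun s : ℝ => (1 - s) * s ^ m) 1
    _ = ∫ s in (0 : ℝ)..1, (s ^ m - s ^ (m + 1)) := by congr with s; ring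
    _ = 1 / (m + 1) - 1 / (m + 2) := by
        rw [intervalIntegral.integral_sub (by simp) (by simp), integral_pow, integral_pow]
        push_cast
        norm_num [add_assoc]
    _ = 1 / ((m + 1) * (m + 2)) := by field_simp; ring

theorem one_sub_rpow_div_le_one_sub {t q : ℝ} (ht : 0 ≤ t) (hq : 1 ≤ q) :
    (1 - t ^ q) / q ≤ 1 - t := by
  have hbernoulli := one_add_mul_self_le_rpow_one_add (s := t - 1) (by linarith) hq
  rw [add_sub_cancel] at hbernoulli
  rw [div_le_iff₀ (by linarith)]
  linarith

/-- Bernoulli's inequality cancels the pole of the integrand at `1`. -/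
theorem integrableOn_rpow_mul_one_sub_rpow_pow_div {p : ℝ} (hp : 0 ≤ p) (m : ℕ) :
    IntegrableOn (fun t : ℝ => t ^ p * ((1 - t ^ (p + 1)) / (p + 1)) ^ (m + 1) / (1 - t))
      (Set.Ioo 0 1) := by
  refine Measure.integrableOn_of_bounded (M := 1) (by simp)
    (Measurable.aestronglyMeasurable (by fun_prop))
    ((ae_restrict_iff' measurableSet_Ioo).2 (.of_forall fun t ht => ?_))
  have hone_sub : 0 < 1 - t := sub_pos.2 ht.2
  have hq_nonneg : 0 ≤ (1 - t ^ (p + 1)) / (p + 1) :=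
    div_nonneg (sub_nonneg.2 (Real.rpow_le_one ht.1.le ht.2.le (by linarith))) (by linarith)
  have hrpow_nonneg : 0 ≤ t ^ p := Real.rpow_nonneg ht.1.le p
  rw [Real.norm_of_nonneg (by positivity), div_le_one hone_sub]
  calc t ^ p * ((1 - t ^ (p + 1)) / (p + 1)) ^ (m + 1)
      ≤ 1 * (1 - t) ^ (m + 1) := by
        gcongr
        · exact Real.rpow_le_one ht.1.le ht.2.le hp
        · exact one_sub_rpow_div_le_one_sub ht.1.le (by linarith)
    _ ≤ 1 - t := by
        rw [one_mul]
        exact pow_le_of_le_one hone_sub.le (by linarith [ht.1]) m.succ_ne_zero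

theorem setIntegral_rpow_mul_one_sub_rpow_pow_div {n : ℕ} (hn : n ≠ 0) (k : ℕ) :
    ∫ t in Set.Ioo (0 : ℝ) 1, t ^ (1 / n : ℝ) *
        ((1 - t ^ (1 / n + 1 : ℝ)) / (1 / n + 1)) ^ k / (1 - t) =
      n * (n / (n + 1) : ℝ) ^ k *
        ∫ u in Set.Ioo (0 : ℝ) 1, u ^ n * (1 - u ^ (n + 1)) ^ k / (1 - u ^ n) := by
  rw [setIntegral_Ioo_zero_one_eq_setIntegral_pow hn, ← integral_const_mul]
  refine setIntegral_congr_fun measurableSet_Ioo fun u hu => ?_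
  have hn' : (n : ℝ) ≠ 0 := Nat.cast_ne_zero.2 hn
  have hroot : (u ^ n) ^ (1 / n : ℝ) = u := by
    rw [one_div, Real.pow_rpow_inv_natCast hu.1.le hn]
  have hroot_succ : (u ^ n) ^ (1 / n + 1 : ℝ) = u ^ (n + 1) := by
    rw [Real.rpow_add_one (pow_pos hu.1 n).ne', hroot, pow_succ']
  have hfactor : (1 - u ^ (n + 1)) / (1 / n + 1 : ℝ) = n / (n + 1) * (1 - u ^ (n + 1)) := by
    field_simp
    ring
  simp only [hroot, hroot_succ, hfactor, mul_pow, smul_eq_mul]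
  rw [← pow_sub_one_mul hn u]
  ring

end Integrals

section GeometricMean

variable {ι : Type*} [Fintype ι] {n : ℕ} {x y : ι → ℝ} {c t : ℝ}

/-- The geometric mean of a vector with nonnegative coordinates; a negative product gives a junk
value of `Real.rpow`. -/
noncomputable def geometricMean (x : ι → ℝ) : ℝ :=
  (∏ i, x i) ^ (1 / Fintype.card ι : ℝ)

theorem measurable_geometricMean : Measurable (geometricMean (ι := ι)) := by
  unfold geometricMean
  fun_prop

theorem geometricMean_comp_perm (σ : Equiv.Perm ι) (x : ι → ℝ) :
    geometricMean (x ∘ σ) = geometricMean x :=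
  congrArg (· ^ (1 / Fintype.card ι : ℝ)) (Equiv.prod_comp σ x)

theorem geometricMean_eq_prod_rpow (hx : ∀ i, 0 ≤ x i) :
    geometricMean x = ∏ i, x i ^ (1 / Fintype.card ι : ℝ) :=
  (Real.finsetProd_rpow _ _ (fun i _ => hx i) _).symm

theorem geometricMean_mono (hx : ∀ i, 0 ≤ x i) (hxy : ∀ i, x i ≤ y i) :
    geometricMean x ≤ geometricMean y :=
  Real.rpow_le_rpow (Finset.prod_nonneg fun i _ => hx i)
    (Finset.prod_le_prod (fun i _ => hx i) fun i _ => hxy i) (by positivity)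

theorem geometricMean_const [Nonempty ι] (hc : 0 ≤ c) : geometricMean (fun _ : ι => c) = c := by
  rw [geometricMean, Finset.prod_const, Finset.card_univ, one_div,
    Real.pow_rpow_inv_natCast hc Fintype.card_ne_zero]

theorem geometricMean_smul [Nonempty ι] (hc : 0 ≤ c) (hx : ∀ i, 0 ≤ x i) :
    geometricMean (c • x) = c * geometricMean x := by
  simp only [geometricMean, Pi.smul_apply, smul_eq_mul, Finset.prod_mul_distrib]
  rw [Real.mul_rpow (Finset.prod_nonneg fun _ _ => hc) (Finset.prod_nonneg fun i _ => hx i)]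
  exact congrArg (· * _) (geometricMean_const hc)

theorem geometricMean_mem_Icc [Nonempty ι] (hx : ∀ i, 0 ≤ x i) :
    geometricMean x ∈ Set.Icc (Finset.univ.inf' Finset.univ_nonempty x)
      (Finset.univ.sup' Finset.univ_nonempty x) := by
  have hinf : 0 ≤ Finset.univ.inf' Finset.univ_nonempty x := Finset.le_inf' _ _ fun i _ => hx i
  have hle_sup : ∀ i, x i ≤ Finset.univ.sup' Finset.univ_nonempty x :=
    fun i => Finset.le_sup' x (Finset.mem_univ i)
  have hsup : 0 ≤ Finset.univ.sup' Finset.univ_nonempty x :=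
    (hx (Classical.arbitrary ι)).trans (hle_sup _)
  constructor
  · rw [← geometricMean_const (ι := ι) hinf]
    exact geometricMean_mono (fun _ => hinf) fun i => Finset.inf'_le x (Finset.mem_univ i)
  · rw [← geometricMean_const (ι := ι) hsup]
    exact geometricMean_mono hx hle_sup

theorem geometricMean_cons_one_cons (ht : 0 ≤ t) {z : Fin n → ℝ} (hz : ∀ i, 0 ≤ z i) :
    geometricMean (Fin.cons 1 (Fin.cons t z) : Fin (n + 2) → ℝ) =
      t ^ (1 / (n + 2 : ℕ) : ℝ) * ∏ i, z i ^ (1 / (n + 2 : ℕ) : ℝ) := by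
  rw [geometricMean_eq_prod_rpow fun i => Fin.cases zero_le_one (fun i => Fin.cases ht hz i) i]
  simp only [Fin.prod_univ_succ, Fin.cons_zero, Fin.cons_succ, Real.one_rpow, one_mul,
    Fintype.card_fin]

theorem setIntegral_geometricMean_cons_one_cons (ht : t ∈ Set.Ioo 0 1) :
    ∫ z in Set.univ.pi fun _ : Fin n => Set.Ioo t 1,
        (geometricMean (Fin.cons 1 (Fin.cons t z) : Fin (n + 2) → ℝ) - t) / (1 - t) =
      t ^ (1 / (n + 2 : ℕ) : ℝ) *
        ((1 - t ^ (1 / (n + 2 : ℕ) + 1 : ℝ)) / (1 / (n + 2 : ℕ) + 1)) ^ n / (1 - t) -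
          t * (1 - t) ^ n / (1 - t) := by
  have hexponent : -1 < (1 / (n + 2 : ℕ) : ℝ) := neg_one_lt_zero.trans_le (by positivity)
  have hvolume : volume.real (Set.univ.pi fun _ : Fin n => Set.Ioo t 1) = (1 - t) ^ n := by
    rw [Measure.real, Real.volume_pi_Ioo_toReal fun _ => ht.2.le]
    simp
  calc ∫ z in Set.univ.pi fun _ : Fin n => Set.Ioo t 1,
        (geometricMean (Fin.cons 1 (Fin.cons t z) : Fin (n + 2) → ℝ) - t) / (1 - t)
      = (∫ z in Set.univ.pi fun _ : Fin n => Set.Ioo t 1,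
          (t ^ (1 / (n + 2 : ℕ) : ℝ) * ∏ i, z i ^ (1 / (n + 2 : ℕ) : ℝ) - t)) / (1 - t) := by
        rw [integral_div, setIntegral_congr_fun (.univ_pi fun _ => measurableSet_Ioo)]
        intro z hz
        exact congrArg (· - t) <|
          geometricMean_cons_one_cons ht.1.le fun i => (ht.1.trans (hz i trivial).1).le
    _ = (t ^ (1 / (n + 2 : ℕ) : ℝ) * (∫ z in Set.univ.pi fun _ : Fin n => Set.Ioo t 1,
          ∏ i, z i ^ (1 / (n + 2 : ℕ) : ℝ)) - t * (1 - t) ^ n) / (1 - t) := by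
        rw [integral_sub ((integrableOn_pi_Ioo_prod_rpow hexponent).const_mul _)
          (integrableOn_pi_Ioo_of_norm_le aestronglyMeasurable_const fun _ _ => le_rfl),
          integral_const_mul, setIntegral_const, hvolume, smul_eq_mul, mul_comm t]
    _ = _ := by
        rw [setIntegral_pi_Ioo_prod_rpow ht.2.le hexponent, Real.one_rpow, Fintype.card_fin,
          sub_div]

theorem setIntegral_ornessDistribution_geometricMean (m : ℕ) :
    ∫ x in Set.univ.pi fun _ : Fin (m + 1 + 2) => Set.Ioo 0 1,
        ornessDistribution geometricMean x =
      (m + 2) * ((∫ t in Set.Ioo (0 : ℝ) 1, t ^ (1 / (m + 1 + 2 : ℕ) : ℝ) *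
        ((1 - t ^ (1 / (m + 1 + 2 : ℕ) + 1 : ℝ)) / (1 / (m + 1 + 2 : ℕ) + 1)) ^ (m + 1) /
          (1 - t)) - 1 / ((m + 1) * (m + 2))) := by
  have hintegrable : IntegrableOn (fun t : ℝ => t * (1 - t) ^ m) (Set.Ioo 0 1) :=
    (Continuous.integrableOn_Icc (by fun_prop)).mono_set Set.Ioo_subset_Icc_self
  rw [setIntegral_ornessDistribution measurable_geometricMean geometricMean_comp_perm
      (fun c hc x hx => geometricMean_smul hc.le fun i => (hx i).le)
      fun x hx => geometricMean_mem_Icc fun i => (hx i).le,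
    ← setIntegral_Ioo_mul_one_sub_pow, ← integral_sub
      (integrableOn_rpow_mul_one_sub_rpow_pow_div (by positivity) m) hintegrable]
  congr 1
  · push_cast
    ring
  · refine setIntegral_congr_fun measurableSet_Ioo fun t ht => ?_
    have hpole : t * (1 - t) ^ (m + 1) / (1 - t) = t * (1 - t) ^ m := by
      rw [pow_succ, ← mul_assoc, mul_div_cancel_right₀ _ (sub_pos.2 ht.2).ne']
    rw [← hpole]
    exact setIntegral_geometricMean_cons_one_cons ht

end GeometricMean

/-- For `n ≥ 3`, the orness average value over `[0,1]^n` of the geometric mean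
`G(x) = (∏ᵢ xᵢ)^{1/n}` equals
`n(n−1)(n/(n+1))^{n−2} ∫_0^1 xⁿ(1−x^{n+1})^{n−2}/(1−xⁿ) dx − 1/(n−2)`. -/
theorem orness_average_geometric_mean (n : ℕ) (hn : 3 ≤ n) :
    (∫ x in Set.univ.pi fun _ : Fin n => Set.Ioo (0 : ℝ) 1,
        ((∏ i : Fin n, x i) ^ (1 / (n : ℝ)) -
            Finset.univ.inf' ⟨⟨0, by omega⟩, Finset.mem_univ _⟩ x) /
          (Finset.univ.sup' ⟨⟨0, by omega⟩, Finset.mem_univ _⟩ x -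
            Finset.univ.inf' ⟨⟨0, by omega⟩, Finset.mem_univ _⟩ x))
      = (n : ℝ) * ((n : ℝ) - 1) * ((n : ℝ) / ((n : ℝ) + 1)) ^ (n - 2) *
            (∫ x in Set.Ioo (0 : ℝ) 1, x ^ n * (1 - x ^ (n + 1)) ^ (n - 2) / (1 - x ^ n)) -
          1 / ((n : ℝ) - 2) := by
  obtain ⟨m, rfl⟩ : ∃ m, n = m + 1 + 2 := ⟨n - 3, by omega⟩
  have haverage := setIntegral_ornessDistribution_geometricMean m
  rw [setIntegral_rpow_mul_one_sub_rpow_pow_div (by omega)] at haverage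
  simp only [ornessDistribution, geometricMean, Fintype.card_fin] at haverage
  have hsub_two : ((m + 1 + 2 : ℕ) : ℝ) - 2 = m + 1 := by
    push_cast
    ring
  rw [haverage, Nat.add_sub_cancel, hsub_two]
  push_cast
  field_simp
  ring
end

section
/- Let n ≥ 2 and let a : 2^{{1,…,n}} → ℝ be a set function with a(∅) = 0 and Σ_{S ⊆ {1,…,n}} a(S) = 1, chosen so that C_a(x) = Σ_{S ⊆ {1,…,n}} a(S) min_{i ∈ S} x_i is nondecreasing in each variable. Then the global orness value of C_a over [0,1]^n equals (1/(n−1)) Σ_{S ⊆ {1,…,n}} a(S) (n − |S|)/(|S| + 1); in particular it coincides with the orness average value of C_a over [0,1]^n. -/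
open MeasureTheory

/-- The discrete Choquet integral (Lovász extension) associated with a set function
`a : 2^{[n]} → ℝ`: `C_a(x) = Σ_{S ⊆ [n]} a(S) min_{i ∈ S} x_i`, with the convention that
the term for `S = ∅` contributes `0`. -/
noncomputable def choquet {n : ℕ} (a : Finset (Fin n) → ℝ) (x : Fin n → ℝ) : ℝ :=
  ∑ S : Finset (Fin n), a S * (if h : S.Nonempty then S.inf' h x else 0)

/-!
Call `F` invariant if `F (r • x + c) = F x` for all `r > 0` and all constant shifts `c`. Inside the
cube `(0,1)ⁿ`, the superlevel sets `{t < min}` and `{t < 1 - max}` are the cubes `(t,1)ⁿ` and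
`(0,1-t)ⁿ`, and the integral of `F` over either one is `(1-t)ⁿ ∫ F`. By the layer-cake formula,
`∫ F * min = ∫ F * (1 - max) = (∫ F) / (n+1)`, so that `∫ F * (max - min) = (n-1)/(n+1) * ∫ F`: an
invariant function is uncorrelated with the range of a uniform sample. The ratio
`(C_a - min) / (max - min)` is invariant, and multiplying it by the range gives back `C_a - min`.
The layer-cake formula also gives the means `∫ min_S = 1 / (|S|+1)`, hence the explicit value.
-/

section LayerCake

variable {α : Type*} [MeasurableSpace α] {μ : Measure α} [SFinite μ] {F G : α → ℝ}

lemma integral_mul_eq_integral_setIntegral_lt {b : ℝ} (hF : Integrable F μ) (hG : Measurable G)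
    (hGb : ∀ᵐ x ∂μ, G x ∈ Set.Icc 0 b) :
    ∫ x, F x * G x ∂μ = ∫ t in Set.Ioo 0 b, ∫ x in {x | t < G x}, F x ∂μ := by
  have slice (x : α) (t : ℝ) :
      {x | t < G x}.indicator F x = (Set.Iio (G x)).indicator (fun _ ↦ F x) t := rfl
  have integrable_slices : Integrable (Function.uncurry fun x t ↦ {x | t < G x}.indicator F x)
      (μ.prod (volume.restrict (Set.Ioo 0 b))) :=
    (hF.comp_fst _).indicator (measurableSet_lt measurable_snd (hG.comp measurable_fst))
  calc ∫ x, F x * G x ∂μ = ∫ x, (∫ t in Set.Ioo 0 b, {x | t < G x}.indicator F x) ∂μ := by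
        refine integral_congr_ae (hGb.mono fun x hx ↦ ?_)
        have : Set.Iio (G x) ∩ Set.Ioo 0 b = Set.Ioo 0 (G x) := by
          rw [← Set.Ioi_inter_Iio, Set.inter_left_comm, Set.Iio_inter_Iio, min_eq_left hx.2,
            Set.Ioi_inter_Iio]
        simp only [slice, integral_indicator measurableSet_Iio,
          Measure.restrict_restrict measurableSet_Iio, this]
        simp [hx.1, mul_comm]
    _ = ∫ t in Set.Ioo 0 b, ∫ x, {x | t < G x}.indicator F x ∂μ :=
        integral_integral_swap integrable_slices
    _ = ∫ t in Set.Ioo 0 b, ∫ x in {x | t < G x}, F x ∂μ := by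
        simp only [integral_indicator (measurableSet_lt measurable_const hG)]

lemma setIntegral_Ioo_one_sub_pow (k : ℕ) :
    ∫ t in Set.Ioo (0 : ℝ) 1, (1 - t) ^ k = 1 / ((k : ℝ) + 1) := by
  rw [← integral_Ioc_eq_integral_Ioo, ← intervalIntegral.integral_of_le zero_le_one,
    intervalIntegral.integral_comp_sub_left (fun t ↦ t ^ k)]
  simp [integral_pow]

lemma integral_mul_of_setIntegral_lt_eq_pow {k : ℕ} {K : ℝ} (hF : Integrable F μ)
    (hG : Measurable G) (hG01 : ∀ᵐ x ∂μ, G x ∈ Set.Icc 0 1)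
    (h : ∀ t ∈ Set.Ioo (0 : ℝ) 1, ∫ x in {x | t < G x}, F x ∂μ = (1 - t) ^ k * K) :
    ∫ x, F x * G x ∂μ = 1 / ((k : ℝ) + 1) * K := by
  rw [integral_mul_eq_integral_setIntegral_lt hF hG hG01,
    setIntegral_congr_fun measurableSet_Ioo h, integral_mul_const, setIntegral_Ioo_one_sub_pow]

end LayerCake

/-- The open cube `(a, b)^ι`: the unit cube for `a = 0`, `b = 1`, and the smaller cubes cut out of
it by the superlevel sets of `min` and `1 - max`. -/
abbrev openCube (ι : Type*) (a b : ℝ) : Set (ι → ℝ) := Set.univ.pi fun _ ↦ Set.Ioo a b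

section OpenCube

variable {ι : Type*} {F G : (ι → ℝ) → ℝ} {S : Finset ι} {x : ι → ℝ}

lemma measurableSet_openCube [Countable ι] (a b : ℝ) : MeasurableSet (openCube ι a b) :=
  MeasurableSet.univ_pi fun _ ↦ measurableSet_Ioo

lemma openCube_subset_Icc (a b : ℝ) : openCube ι a b ⊆ Set.Icc (fun _ ↦ a) fun _ ↦ b :=
  fun _ hx ↦ ⟨fun i ↦ (hx i trivial).1.le, fun i ↦ (hx i trivial).2.le⟩

lemma inf'_mem_Ioo_of_mem_openCube {a b : ℝ} (hS : S.Nonempty) (hx : x ∈ openCube ι a b) :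
    S.inf' hS x ∈ Set.Ioo a b := by
  obtain ⟨i, -, h⟩ := S.exists_mem_eq_inf' hS x
  exact h ▸ hx i trivial

lemma sup'_mem_Ioo_of_mem_openCube {a b : ℝ} (hS : S.Nonempty) (hx : x ∈ openCube ι a b) :
    S.sup' hS x ∈ Set.Ioo a b := by
  obtain ⟨i, -, h⟩ := S.exists_mem_eq_sup' hS x
  exact h ▸ hx i trivial

lemma continuous_inf'_coord (hS : S.Nonempty) : Continuous fun x : ι → ℝ ↦ S.inf' hS x :=
  Continuous.finset_inf'_apply hS fun i _ ↦ continuous_apply i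

lemma continuous_sup'_coord (hS : S.Nonempty) : Continuous fun x : ι → ℝ ↦ S.sup' hS x :=
  Continuous.finset_sup'_apply hS fun i _ ↦ continuous_apply i

lemma setOf_lt_inf'_inter_openCube [DecidableEq ι] (hS : S.Nonempty) {t : ℝ} (ht : 0 ≤ t) :
    {x | t < S.inf' hS x} ∩ openCube ι 0 1 =
      Set.univ.pi fun i ↦ Set.Ioo (if i ∈ S then t else 0) 1 := by
  ext x
  simp only [Set.mem_inter_iff, Set.mem_ofPred_eq, Finset.lt_inf'_iff, Set.mem_univ_pi, Set.mem_Ioo]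
  grind

variable [Fintype ι]

instance isProbabilityMeasure_restrict_openCube :
    IsProbabilityMeasure ((volume : Measure (ι → ℝ)).restrict (openCube ι 0 1)) :=
  ⟨by simp [openCube, Real.volume_pi_Ioo]⟩

lemma ae_restrict_openCube_of_forall_mem {p : (ι → ℝ) → Prop} {a b : ℝ}
    (h : ∀ x ∈ openCube ι a b, p x) : ∀ᵐ x ∂volume.restrict (openCube ι a b), p x :=
  (ae_restrict_iff' (measurableSet_openCube a b)).2 (.of_forall h)

lemma integrableOn_openCube_mul_continuous {a b : ℝ} (hF : IntegrableOn F (openCube ι a b))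
    (hG : Continuous G) : IntegrableOn (fun x ↦ F x * G x) (openCube ι a b) :=
  hF.mul_continuousOn_of_subset hG.continuousOn (measurableSet_openCube a b) isCompact_Icc
    (openCube_subset_Icc a b)

lemma integrableOn_openCube_of_continuous (hG : Continuous G) (a b : ℝ) :
    IntegrableOn G (openCube ι a b) :=
  (hG.continuousOn.integrableOn_compact isCompact_Icc).mono_set (openCube_subset_Icc a b)

open Pointwise in
lemma setIntegral_openCube_eq_pow_mul (F : (ι → ℝ) → ℝ) {a b : ℝ} (hab : a < b) :
    ∫ x in openCube ι a b, F x =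
      (b - a) ^ Fintype.card ι * ∫ x in openCube ι 0 1, F (fun i ↦ (b - a) * x i + a) := by
  have hba : 0 < b - a := sub_pos.2 hab
  have preimage_add : (· + fun _ ↦ a) ⁻¹' openCube ι a b = openCube ι 0 (b - a) := by
    ext x
    simp [openCube, lt_sub_iff_add_lt]
  have smul_cube : (b - a) • openCube ι 0 1 = openCube ι 0 (b - a) := by
    simp only [openCube, smul_univ_pi, Pi.smul_def, LinearOrderedField.smul_Ioo hba, mul_zero,
      mul_one]
  have scale := Measure.setIntegral_comp_smul_of_pos volume (fun x ↦ F (x + fun _ ↦ a))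
    (openCube ι 0 1) hba
  rw [smul_cube, Module.finrank_fintype_fun_eq_card, smul_eq_mul, ← preimage_add,
    (measurePreserving_add_right volume _).setIntegral_preimage_emb
      (measurableEmbedding_addRight _) F] at scale
  exact (eq_inv_mul_iff_mul_eq₀ (pow_ne_zero _ hba.ne')).1 scale |>.symm

lemma setIntegral_openCube_inf' (hS : S.Nonempty) :
    ∫ x in openCube ι 0 1, S.inf' hS x = 1 / ((S.card : ℝ) + 1) := by
  classical
  have volume_lt_inf' (t : ℝ) (ht : t ∈ Set.Ioo (0 : ℝ) 1) :
      ∫ _x in {x | t < S.inf' hS x}, (1 : ℝ) ∂volume.restrict (openCube ι 0 1) =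
        (1 - t) ^ S.card * 1 := by
    have le_one : (fun i ↦ if i ∈ S then t else 0) ≤ fun _ : ι ↦ (1 : ℝ) := fun i ↦ by
      dsimp only; split_ifs <;> simp [ht.2.le]
    rw [Measure.restrict_restrict
        (measurableSet_lt measurable_const (continuous_inf'_coord hS).measurable),
      setOf_lt_inf'_inter_openCube hS ht.1.le, setIntegral_const, measureReal_def,
      Real.volume_pi_Ioo_toReal le_one]
    simp [sub_ite, Finset.prod_ite_mem]
  simpa only [one_mul, mul_one] using
    integral_mul_of_setIntegral_lt_eq_pow (integrable_const 1) (continuous_inf'_coord hS).measurable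
      (ae_restrict_openCube_of_forall_mem fun _ hx ↦
        Set.Ioo_subset_Icc_self (inf'_mem_Ioo_of_mem_openCube hS hx)) volume_lt_inf'

end OpenCube

/-- Invariance of `F` under the positive affine rescalings `x ↦ r • x + c` that act in the same way
on every coordinate. Such an `F` is uncorrelated with the range of a uniform sample. -/
def PosAffineInvariant {ι : Type*} (F : (ι → ℝ) → ℝ) : Prop :=
  ∀ (r c : ℝ) (x : ι → ℝ), 0 < r → F (fun i ↦ r * x i + c) = F x

/-- Stability of `F` for positive affine rescalings: a common change of scale `t ↦ r * t + c` of the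
arguments changes the value in the same way. The functions `min`, `max` and the normalized Choquet
integrals have this property. -/
def PosAffineEquivariant {ι : Type*} (F : (ι → ℝ) → ℝ) : Prop :=
  ∀ (r c : ℝ) (x : ι → ℝ), 0 < r → F (fun i ↦ r * x i + c) = r * F x + c

section PosAffine

variable {ι : Type*}

lemma posAffineInvariant_const (k : ℝ) : PosAffineInvariant fun _ : ι → ℝ ↦ k :=
  fun _ _ _ _ ↦ rfl

lemma posAffineEquivariant_inf' {S : Finset ι} (hS : S.Nonempty) :
    PosAffineEquivariant fun x ↦ S.inf' hS x := fun r c _ hr ↦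
  (Finset.apply_inf'_eq_inf'_comp hS (fun t ↦ r * t + c)
    fun _ _ ↦ ((monotone_id.const_mul hr.le).add_const c).map_min).symm

lemma posAffineEquivariant_sup' {S : Finset ι} (hS : S.Nonempty) :
    PosAffineEquivariant fun x ↦ S.sup' hS x := fun r c _ hr ↦
  (Finset.apply_sup'_eq_sup'_comp hS (fun t ↦ r * t + c)
    fun _ _ ↦ ((monotone_id.const_mul hr.le).add_const c).map_max).symm

lemma PosAffineEquivariant.apply_const {F : (ι → ℝ) → ℝ} (hF : PosAffineEquivariant F) (c : ℝ) :
    F (fun _ ↦ c) = c := by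
  -- The constant vector `c` is fixed by `t ↦ 2 * t - c`.
  have h := hF 2 (-c) (fun _ ↦ c) two_pos
  rw [show (2 * c + -c : ℝ) = c by ring] at h
  linarith

lemma PosAffineInvariant.setIntegral_openCube [Fintype ι] {F : (ι → ℝ) → ℝ}
    (hF : PosAffineInvariant F) {a b : ℝ} (hab : a < b) :
    ∫ x in openCube ι a b, F x = (b - a) ^ Fintype.card ι * ∫ x in openCube ι 0 1, F x := by
  rw [setIntegral_openCube_eq_pow_mul F hab]
  simp only [hF _ _ _ (sub_pos.2 hab)]

end PosAffine

/-- The range `max - min` of the coordinates of `x`. -/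
noncomputable def coordRange {ι : Type*} [Fintype ι] [Nonempty ι] (x : ι → ℝ) : ℝ :=
  Finset.univ.sup' Finset.univ_nonempty x - Finset.univ.inf' Finset.univ_nonempty x

/-- The relative position `(F x - min) / (max - min)` of `F x` between the extreme coordinates of
`x`, whose mean over the unit cube is the orness average value of `F`. On the (null) diagonal it has
the junk value `0`. -/
noncomputable def ornessRatio {ι : Type*} [Fintype ι] [Nonempty ι] (F : (ι → ℝ) → ℝ)
    (x : ι → ℝ) : ℝ :=
  (F x - Finset.univ.inf' Finset.univ_nonempty x) / coordRange x

/-- The global orness value of `F`: the relative position of the mean of `F` over the unit cube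
between the means of `min` and `max`. -/
noncomputable def globalOrness {ι : Type*} [Fintype ι] [Nonempty ι] (F : (ι → ℝ) → ℝ) : ℝ :=
  ((∫ x in openCube ι 0 1, F x) -
      ∫ x in openCube ι 0 1, Finset.univ.inf' Finset.univ_nonempty x) /
    ((∫ x in openCube ι 0 1, Finset.univ.sup' Finset.univ_nonempty x) -
      ∫ x in openCube ι 0 1, Finset.univ.inf' Finset.univ_nonempty x)

section Orness

variable {ι : Type*} [Fintype ι] [Nonempty ι] {F : (ι → ℝ) → ℝ}

lemma coordRange_nonneg (x : ι → ℝ) : 0 ≤ coordRange x :=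
  sub_nonneg.2 <| (Finset.inf'_le x (Finset.mem_univ (Classical.arbitrary ι))).trans <|
    Finset.le_sup' x (Finset.mem_univ _)

lemma continuous_coordRange : Continuous (coordRange : (ι → ℝ) → ℝ) :=
  (continuous_sup'_coord _).sub (continuous_inf'_coord _)

lemma coordRange_mul_add_const {r : ℝ} (hr : 0 < r) (c : ℝ) (x : ι → ℝ) :
    coordRange (fun i ↦ r * x i + c) = r * coordRange x := by
  simp only [coordRange, posAffineEquivariant_inf' _ r c x hr,
    posAffineEquivariant_sup' _ r c x hr]
  ring

lemma eq_const_inf'_of_coordRange_eq_zero {x : ι → ℝ} (hx : coordRange x = 0) :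
    x = fun _ ↦ Finset.univ.inf' Finset.univ_nonempty x :=
  funext fun i ↦ le_antisymm
    ((Finset.le_sup' x (Finset.mem_univ i)).trans_eq (sub_eq_zero.1 hx))
    (Finset.inf'_le x (Finset.mem_univ i))

lemma abs_inf'_sub_inf'_univ_le_coordRange {S : Finset ι} (hS : S.Nonempty) (x : ι → ℝ) :
    |S.inf' hS x - Finset.univ.inf' Finset.univ_nonempty x| ≤ coordRange x := by
  obtain ⟨i, -, hi⟩ := S.exists_mem_eq_inf' hS x
  rw [hi, abs_of_nonneg (sub_nonneg.2 (Finset.inf'_le x (Finset.mem_univ i)))]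
  exact sub_le_sub_right (Finset.le_sup' x (Finset.mem_univ i)) _

lemma PosAffineEquivariant.posAffineInvariant_ornessRatio (hF : PosAffineEquivariant F) :
    PosAffineInvariant (ornessRatio F) := fun r c x hr ↦ by
  simp only [ornessRatio, hF r c x hr, posAffineEquivariant_inf' _ r c x hr,
    coordRange_mul_add_const hr, add_sub_add_right_eq_sub, ← mul_sub]
  exact mul_div_mul_left _ _ hr.ne'

lemma PosAffineEquivariant.ornessRatio_mul_coordRange (hF : PosAffineEquivariant F) (x : ι → ℝ) :
    ornessRatio F x * coordRange x = F x - Finset.univ.inf' Finset.univ_nonempty x := by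
  refine div_mul_cancel_of_imp fun hx ↦ sub_eq_zero.2 ?_
  conv_lhs => rw [eq_const_inf'_of_coordRange_eq_zero hx, hF.apply_const]

lemma setOf_lt_inf'_univ_inter_openCube {t : ℝ} (ht : 0 ≤ t) :
    {x | t < Finset.univ.inf' Finset.univ_nonempty x} ∩ openCube ι 0 1 = openCube ι t 1 := by
  classical
  simpa using setOf_lt_inf'_inter_openCube Finset.univ_nonempty ht

lemma setOf_lt_one_sub_sup'_univ_inter_openCube {t : ℝ} (ht : 0 ≤ t) :
    {x | t < 1 - Finset.univ.sup' Finset.univ_nonempty x} ∩ openCube ι 0 1 =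
      openCube ι 0 (1 - t) := by
  ext x
  simp only [lt_sub_comm (a := t) (b := 1), Set.mem_inter_iff, Set.mem_ofPred_eq,
    Finset.sup'_lt_iff, Finset.mem_univ, true_imp_iff, Set.mem_univ_pi, Set.mem_Ioo]
  grind

lemma PosAffineInvariant.setIntegral_mul_inf'_univ (hF : PosAffineInvariant F)
    (hFi : IntegrableOn F (openCube ι 0 1)) :
    ∫ x in openCube ι 0 1, F x * Finset.univ.inf' Finset.univ_nonempty x =
      1 / ((Fintype.card ι : ℝ) + 1) * ∫ x in openCube ι 0 1, F x := by
  have hmin : Measurable fun x : ι → ℝ ↦ Finset.univ.inf' Finset.univ_nonempty x :=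
    (continuous_inf'_coord _).measurable
  refine integral_mul_of_setIntegral_lt_eq_pow hFi hmin
    (ae_restrict_openCube_of_forall_mem fun x hx ↦
      Set.Ioo_subset_Icc_self (inf'_mem_Ioo_of_mem_openCube _ hx)) fun t ht ↦ ?_
  rw [Measure.restrict_restrict (measurableSet_lt measurable_const hmin),
    setOf_lt_inf'_univ_inter_openCube ht.1.le, hF.setIntegral_openCube ht.2]

lemma PosAffineInvariant.setIntegral_mul_one_sub_sup'_univ (hF : PosAffineInvariant F)
    (hFi : IntegrableOn F (openCube ι 0 1)) :
    ∫ x in openCube ι 0 1, F x * (1 - Finset.univ.sup' Finset.univ_nonempty x) =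
      1 / ((Fintype.card ι : ℝ) + 1) * ∫ x in openCube ι 0 1, F x := by
  have hmax : Measurable fun x : ι → ℝ ↦ 1 - Finset.univ.sup' Finset.univ_nonempty x :=
    (continuous_const.sub (continuous_sup'_coord _)).measurable
  refine integral_mul_of_setIntegral_lt_eq_pow hFi hmax
    (ae_restrict_openCube_of_forall_mem fun x hx ↦ ?_) fun t ht ↦ ?_
  · have := sup'_mem_Ioo_of_mem_openCube Finset.univ_nonempty hx
    exact ⟨sub_nonneg.2 this.2.le, sub_le_self 1 this.1.le⟩
  · rw [Measure.restrict_restrict (measurableSet_lt measurable_const hmax),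
      setOf_lt_one_sub_sup'_univ_inter_openCube ht.1.le, hF.setIntegral_openCube (sub_pos.2 ht.2),
      sub_zero]

lemma PosAffineInvariant.setIntegral_mul_coordRange (hF : PosAffineInvariant F)
    (hFi : IntegrableOn F (openCube ι 0 1)) :
    ∫ x in openCube ι 0 1, F x * coordRange x =
      ((Fintype.card ι : ℝ) - 1) / ((Fintype.card ι : ℝ) + 1) * ∫ x in openCube ι 0 1, F x := by
  have hmin := integrableOn_openCube_mul_continuous hFi
    (continuous_inf'_coord Finset.univ_nonempty)
  have hmax := integrableOn_openCube_mul_continuous hFi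
    (G := fun x ↦ 1 - Finset.univ.sup' Finset.univ_nonempty x)
    (continuous_const.sub (continuous_sup'_coord _))
  have hFmax : IntegrableOn (fun x ↦ F x - F x * (1 - Finset.univ.sup' Finset.univ_nonempty x))
      (openCube ι 0 1) := hFi.sub hmax
  have split (x : ι → ℝ) : F x * coordRange x =
      F x - F x * (1 - Finset.univ.sup' Finset.univ_nonempty x) -
        F x * Finset.univ.inf' Finset.univ_nonempty x := by
    rw [coordRange]; ring
  simp only [split]
  rw [integral_sub hFmax hmin, integral_sub hFi hmax, hF.setIntegral_mul_one_sub_sup'_univ hFi,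
    hF.setIntegral_mul_inf'_univ hFi]
  field_simp
  ring

lemma setIntegral_sup'_univ_sub_setIntegral_inf'_univ :
    (∫ x in openCube ι 0 1, Finset.univ.sup' Finset.univ_nonempty x) -
        ∫ x in openCube ι 0 1, Finset.univ.inf' Finset.univ_nonempty x =
      ((Fintype.card ι : ℝ) - 1) / ((Fintype.card ι : ℝ) + 1) := by
  rw [← integral_sub (integrableOn_openCube_of_continuous (continuous_sup'_coord _) 0 1)
    (integrableOn_openCube_of_continuous (continuous_inf'_coord _) 0 1)]
  simpa [coordRange] using
    (posAffineInvariant_const (ι := ι) 1).setIntegral_mul_coordRange (integrable_const 1)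

end Orness

theorem PosAffineEquivariant.globalOrness_eq_setIntegral_ornessRatio {ι : Type*} [Fintype ι]
    [Nontrivial ι] {F : (ι → ℝ) → ℝ} (hF : PosAffineEquivariant F)
    (hFi : IntegrableOn (ornessRatio F) (openCube ι 0 1)) :
    globalOrness F = ∫ x in openCube ι 0 1, ornessRatio F x := by
  have mean_eq : ∫ x in openCube ι 0 1, F x =
      (∫ x in openCube ι 0 1, ornessRatio F x * coordRange x) +
        ∫ x in openCube ι 0 1, Finset.univ.inf' Finset.univ_nonempty x := by
    rw [← integral_add (integrableOn_openCube_mul_continuous hFi continuous_coordRange)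
      (integrableOn_openCube_of_continuous (continuous_inf'_coord _) 0 1)]
    simp only [hF.ornessRatio_mul_coordRange, sub_add_cancel]
  have card_gt_one : (1 : ℝ) < Fintype.card ι := mod_cast Fintype.one_lt_card
  have factor_ne_zero : ((Fintype.card ι : ℝ) - 1) / ((Fintype.card ι : ℝ) + 1) ≠ 0 :=
    (div_pos (sub_pos.2 card_gt_one) (by positivity)).ne'
  rw [globalOrness, mean_eq, add_sub_cancel_right, setIntegral_sup'_univ_sub_setIntegral_inf'_univ,
    hF.posAffineInvariant_ornessRatio.setIntegral_mul_coordRange hFi,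
    mul_div_cancel_left₀ _ factor_ne_zero]

section Choquet

variable {n : ℕ} {a : Finset (Fin n) → ℝ}

lemma continuous_dite_inf' (S : Finset (Fin n)) :
    Continuous fun x : Fin n → ℝ ↦ if h : S.Nonempty then S.inf' h x else 0 := by
  split_ifs with hS
  exacts [continuous_inf'_coord hS, continuous_const]

lemma continuous_choquet (a : Finset (Fin n) → ℝ) : Continuous (choquet a) :=
  continuous_finsetSum _ fun S _ ↦ (continuous_dite_inf' S).const_mul (a S)

lemma posAffineEquivariant_choquet (ha0 : a ∅ = 0) (ha1 : ∑ S, a S = 1) :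
    PosAffineEquivariant (choquet a) := fun r c x hr ↦ by
  have hc : c = ∑ S, a S * c := by rw [← Finset.sum_mul, ha1, one_mul]
  conv_rhs => rw [hc, choquet, Finset.mul_sum, ← Finset.sum_add_distrib]
  refine Finset.sum_congr rfl fun S _ ↦ ?_
  rcases S.eq_empty_or_nonempty with rfl | hS
  · simp [ha0]
  · simp only [hS, dif_pos, posAffineEquivariant_inf' hS r c x hr]
    ring

lemma setIntegral_openCube_choquet (ha0 : a ∅ = 0) :
    ∫ x in openCube (Fin n) 0 1, choquet a x = ∑ S, a S / ((S.card : ℝ) + 1) := by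
  simp only [choquet]
  rw [integral_finsetSum _ fun S _ ↦ integrableOn_openCube_of_continuous
    ((continuous_dite_inf' S).const_mul (a S)) 0 1]
  refine Finset.sum_congr rfl fun S _ ↦ ?_
  rw [integral_const_mul]
  rcases S.eq_empty_or_nonempty with rfl | hS
  · simp [ha0]
  · simp only [hS, dif_pos, setIntegral_openCube_inf' hS, mul_one_div]

lemma abs_choquet_sub_inf'_univ_le [Nonempty (Fin n)] (ha0 : a ∅ = 0) (ha1 : ∑ S, a S = 1)
    (x : Fin n → ℝ) :
    |choquet a x - Finset.univ.inf' Finset.univ_nonempty x| ≤ (∑ S, |a S|) * coordRange x := by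
  set m := Finset.univ.inf' Finset.univ_nonempty x with hm
  calc |choquet a x - m|
      = |∑ S, a S * ((if h : S.Nonempty then S.inf' h x else 0) - m)| := by
        simp only [choquet, mul_sub, Finset.sum_sub_distrib, ← Finset.sum_mul, ha1, one_mul]
    _ ≤ ∑ S, |a S * ((if h : S.Nonempty then S.inf' h x else 0) - m)| :=
        Finset.abs_sum_le_sum_abs _ _
    _ ≤ ∑ S, |a S| * coordRange x := by
        gcongr with S
        rcases S.eq_empty_or_nonempty with rfl | hS
        · simp [ha0]
        · simp only [hS, dif_pos, abs_mul, hm]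
          gcongr
          exact abs_inf'_sub_inf'_univ_le_coordRange hS x
    _ = (∑ S, |a S|) * coordRange x := (Finset.sum_mul ..).symm

lemma integrableOn_ornessRatio_choquet [Nonempty (Fin n)] (ha0 : a ∅ = 0)
    (ha1 : ∑ S, a S = 1) :
    IntegrableOn (ornessRatio (choquet a)) (openCube (Fin n) 0 1) := by
  have hmeas : Measurable (ornessRatio (choquet a)) :=
    ((continuous_choquet a).sub (continuous_inf'_coord _)).measurable.div
      continuous_coordRange.measurable
  refine Integrable.of_bound hmeas.aestronglyMeasurable (∑ S, |a S|) (.of_forall fun x ↦ ?_)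
  rw [ornessRatio, Real.norm_eq_abs, abs_div, abs_of_nonneg (coordRange_nonneg x)]
  exact div_le_of_le_mul₀ (coordRange_nonneg x) (Finset.sum_nonneg fun _ _ ↦ abs_nonneg _)
    (abs_choquet_sub_inf'_univ_le ha0 ha1 x)

lemma globalOrness_choquet [Nontrivial (Fin n)] (ha0 : a ∅ = 0) (ha1 : ∑ S, a S = 1) :
    globalOrness (choquet a) =
      1 / ((n : ℝ) - 1) * ∑ S, a S * ((n : ℝ) - S.card) / ((S.card : ℝ) + 1) := by
  have hn : (n : ℝ) - 1 ≠ 0 :=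
    (sub_pos.2 (mod_cast Fin.nontrivial_iff_two_le.1 ‹_› : (1 : ℝ) < n)).ne'
  have mean_min : (1 : ℝ) / (n + 1) = ∑ S, a S * (1 / ((n : ℝ) + 1)) := by
    rw [← Finset.sum_mul, ha1, one_mul]
  rw [globalOrness, setIntegral_sup'_univ_sub_setIntegral_inf'_univ,
    setIntegral_openCube_choquet ha0, setIntegral_openCube_inf', Finset.card_univ,
    Fintype.card_fin, mean_min, ← Finset.sum_sub_distrib, Finset.sum_div, Finset.mul_sum]
  refine Finset.sum_congr rfl fun S _ ↦ ?_
  field_simp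
  ring

end Choquet

theorem global_orness_choquet_general {n : ℕ} [Nontrivial (Fin n)] (a : Finset (Fin n) → ℝ)
    (ha0 : a ∅ = 0) (ha1 : ∑ S, a S = 1) :
    globalOrness (choquet a) =
        1 / ((n : ℝ) - 1) * ∑ S, a S * ((n : ℝ) - S.card) / ((S.card : ℝ) + 1) ∧
      globalOrness (choquet a) = ∫ x in openCube (Fin n) 0 1, ornessRatio (choquet a) x :=
  ⟨globalOrness_choquet ha0 ha1,
    (posAffineEquivariant_choquet ha0 ha1).globalOrness_eq_setIntegral_ornessRatio
      (integrableOn_ornessRatio_choquet ha0 ha1)⟩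

/-- For `n ≥ 2` and a set function `a` with `a(∅) = 0`, `Σ_S a(S) = 1`, such that the
discrete Choquet integral `C_a` is nondecreasing in each variable, the global orness value
of `C_a` over `[0,1]^n`, namely `(C̄_a − M̄in)/(M̄ax − M̄in)`, equals
`(1/(n−1)) Σ_{S ⊆ [n]} a(S)(n−|S|)/(|S|+1)`; in particular it coincides with the orness
average value of `C_a` over `[0,1]^n`. -/
theorem global_orness_choquet (n : ℕ) (hn : 2 ≤ n) (a : Finset (Fin n) → ℝ)
    (ha0 : a ∅ = 0) (ha1 : ∑ S : Finset (Fin n), a S = 1)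
    (hmono : ∀ (x : Fin n → ℝ) (j : Fin n),
      Monotone fun t : ℝ => choquet a (Function.update x j t)) :
    ((∫ x in Set.univ.pi fun _ : Fin n => Set.Ioo (0 : ℝ) 1, choquet a x) -
          (∫ x in Set.univ.pi fun _ : Fin n => Set.Ioo (0 : ℝ) 1,
            Finset.univ.inf' ⟨⟨0, by omega⟩, Finset.mem_univ _⟩ x)) /
        ((∫ x in Set.univ.pi fun _ : Fin n => Set.Ioo (0 : ℝ) 1,
            Finset.univ.sup' ⟨⟨0, by omega⟩, Finset.mem_univ _⟩ x) -
          (∫ x in Set.univ.pi fun _ : Fin n => Set.Ioo (0 : ℝ) 1,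
            Finset.univ.inf' ⟨⟨0, by omega⟩, Finset.mem_univ _⟩ x))
        = 1 / ((n : ℝ) - 1) *
            ∑ S : Finset (Fin n), a S * ((n : ℝ) - S.card) / ((S.card : ℝ) + 1) ∧
      ((∫ x in Set.univ.pi fun _ : Fin n => Set.Ioo (0 : ℝ) 1, choquet a x) -
          (∫ x in Set.univ.pi fun _ : Fin n => Set.Ioo (0 : ℝ) 1,
            Finset.univ.inf' ⟨⟨0, by omega⟩, Finset.mem_univ _⟩ x)) /
        ((∫ x in Set.univ.pi fun _ : Fin n => Set.Ioo (0 : ℝ) 1,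
            Finset.univ.sup' ⟨⟨0, by omega⟩, Finset.mem_univ _⟩ x) -
          (∫ x in Set.univ.pi fun _ : Fin n => Set.Ioo (0 : ℝ) 1,
            Finset.univ.inf' ⟨⟨0, by omega⟩, Finset.mem_univ _⟩ x))
        = ∫ x in Set.univ.pi fun _ : Fin n => Set.Ioo (0 : ℝ) 1,
            (choquet a x - Finset.univ.inf' ⟨⟨0, by omega⟩, Finset.mem_univ _⟩ x) /
              (Finset.univ.sup' ⟨⟨0, by omega⟩, Finset.mem_univ _⟩ x -
                Finset.univ.inf' ⟨⟨0, by omega⟩, Finset.mem_univ _⟩ x) :=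
  have := Fin.nontrivial_iff_two_le.2 hn
  global_orness_choquet_general a ha0 ha1
end
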